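/- Let A and B be polynomials over ℂ, each of degree at least two, and let z₁, z₂ ∈ ℂ be such that the forward orbits O_A(z₁) and O_B(z₂) have infinite intersection. Assume in addition that A is special, i.e., A is linearly conjugate to z^{deg A}, to T_{deg A}, or to −T_{deg A}. Then A and B have a common iterate: there exist integers k, l ≥ 1 such that A^{∘k} = B^{∘l}. -/

import Mathlib

/-!
After conjugating both polynomials by the same affine map, `A` is either `X ^ n` or `± D_n`, where
`D_n(u + u⁻¹) = u ^ n + u ^ (-n)`. The orbit of `z₁` then consists of the numbers `a ^ (n ^ i)`, or
`± (a ^ (n ^ i) + a ^ (-n ^ i))`, where `a` is not zero and not a root of unity because the orbit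
is infinite.

*Diophantine input.* Two finiteness theorems over number fields are needed: the `S`-unit equation
`u + v = 1` (`sunit_finite`) and Siegel's theorem on integral points of `s ^ 2 = f(x)` when `f` has
three roots of odd multiplicity (`hyperelliptic_finite`). The first is obtained from Padé
approximation: if `(z, 1 - z)` and `(w, 1 - w)` are solutions with `h(w)` much larger than `h(z)`,
then Padé approximants of weight about `h(w) / h(z)` show that they cannot lie close to each other
in the logarithmic embedding, after rescaling by their heights (`height_gap`). This contradicts
compactness if there are infinitely many solutions. The second follows from the first by Siegel's
identity: `x - r₁`, `x - r₂`, `x - r₃` lie in finitely many square classes (finiteness of the class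
number and of the rank of the units, `square_classes`), and after adjoining square roots the
differences of the square roots of the `x - rᵢ` are `S`-units.

*Descent to number fields.* The orbits live in a finitely generated subring `R` of `ℂ`. There is a
homomorphism from `R` to a number field under which the image of `a` has infinite order
(`exists_specialization`). So the finiteness theorems give: an `F` with two distinct roots takes
values `a ^ N` on `R` for finitely many `N` only (`finite_power_values`), and if `F ^ 2 - 4` has
three roots of odd multiplicity then `F` takes values `± (a ^ N + a ^ (-N))` on `R` for finitely
many `N` only (`finite_chebyshev_values`). Since the orbits have infinite intersection, every
iterate `F` of `B` takes infinitely many such values on `R`.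

*Power maps.* Hence no iterate of `B` has two distinct roots, so `B = c X ^ m`. Applying a
homomorphism `ℂˣ → ℚ` with `a ↦ 1` to the equalities between points of the two orbits gives
infinitely many solutions of `m ^ j * p - q = n ^ i`; the unit equation over `ℚ` forces `q = 0` and
then `m ^ l = n ^ k` for some `k, l ≥ 1`, from which a common iterate is found.

*Chebyshev maps.* Hence `F ^ 2 - 4` has at most two roots of odd multiplicity for every iterate
`F` of `B`. By the polynomial Pell equation (`pell`) such an `F` is `± D_d` up to an affine change
of variable, and comparing the leading coefficients for the first three iterates of `B` shows that
`B = ± D_m` (`eq_vieta_of_fewOddRoots`). The relation between `m` and `n` is obtained as before,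
and the signs of the iterates agree because both are evaluated to the same nonzero number.
-/

open Polynomial

/-- The `k`-th compositional iterate `A^{∘k}` of a polynomial, with `A^{∘0} = X`. -/
noncomputable def polyIter (A : Polynomial ℂ) : ℕ → Polynomial ℂ
  | 0 => Polynomial.X
  | k + 1 => A.comp (polyIter A k)

/-- The forward orbit of `z₀` under iterated evaluation of the polynomial `A`. -/
def polyOrbit (A : Polynomial ℂ) (z₀ : ℂ) : Set ℂ :=
  Set.range fun k : ℕ => (fun w => A.eval w)^[k] z₀

/-- `A` is linearly conjugate to `P`: `A∘μ = μ∘P` for some degree-one polynomial `μ`. -/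
def LinConj (A P : Polynomial ℂ) : Prop :=
  ∃ μ : Polynomial ℂ, μ.degree = 1 ∧ A.comp μ = μ.comp P

/-- A polynomial of degree `n` is special if it is linearly conjugate to `z^n`, `T_n`, or `-T_n`. -/
def SpecialPoly (A : Polynomial ℂ) : Prop :=
  LinConj A (Polynomial.X ^ A.natDegree) ∨
    LinConj A (Polynomial.Chebyshev.T ℂ (A.natDegree : ℤ)) ∨
      LinConj A (-(Polynomial.Chebyshev.T ℂ (A.natDegree : ℤ)))

/-! ### Padé approximation of `(1 - z) ^ s` and `z ^ s` -/

/-- The Beta integral at natural numbers. -/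
theorem beta_nat (p q : ℕ) : ∫ t in (0:ℝ)..1, t ^ p * (1 - t) ^ q =
    (p.factorial * q.factorial : ℝ) / (p + q + 1).factorial := by
  induction q generalizing p with
  | zero =>
    simp [integral_pow, Nat.factorial_succ]
    have : (p.factorial : ℝ) ≠ 0 := by positivity
    have : (p + 1 : ℝ) ≠ 0 := by positivity
    field_simp
  | succ q ih =>
    have h1 : ∫ t in (0:ℝ)..1, ((p + 1 : ℝ) * (t ^ p * (1 - t) ^ (q + 1))
        - (q + 1 : ℝ) * (t ^ (p + 1) * (1 - t) ^ q)) = 0 := by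
      have := intervalIntegral.integral_eq_sub_of_hasDerivAt (a := (0:ℝ)) (b := 1)
        (f := fun t : ℝ => t ^ (p + 1) * (1 - t) ^ (q + 1))
        (f' := fun t : ℝ => ((p + 1 : ℝ) * (t ^ p * (1 - t) ^ (q + 1))
        - (q + 1 : ℝ) * (t ^ (p + 1) * (1 - t) ^ q))) (fun t _ => by
          have := (hasDerivAt_pow (p + 1) t).mul
            (((hasDerivAt_id t).const_sub 1).pow (q + 1))
          convert! this using 1
          simp
          ring) (by apply Continuous.intervalIntegrable; fun_prop)
      rw [this]; simp
    rw [intervalIntegral.integral_sub, intervalIntegral.integral_const_mul,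
      intervalIntegral.integral_const_mul, ih (p + 1)] at h1
    · have e : p + (q + 1) + 1 = p + 1 + q + 1 := by ring
      rw [e]
      have h3 : (p + 1 : ℝ) ≠ 0 := by positivity
      have h4 : ((p + 1 + q + 1).factorial : ℝ) ≠ 0 := by positivity
      rw [Nat.factorial_succ p] at h1
      rw [Nat.factorial_succ q]
      rw [sub_eq_zero] at h1
      apply mul_left_cancel₀ h3
      rw [h1]
      push_cast
      ring
    all_goals (apply Continuous.intervalIntegrable; fun_prop)

/-- The integer polynomial which, up to normalisation, is the hypergeometric integral
`∫ t ^ a (1 - t) ^ c (1 - z t) ^ b` over `[0, 1]`. -/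
noncomputable def jPoly (a b c : ℕ) : ℤ[X] :=
  ∑ k ∈ Finset.range (b + 1),
    C ((-1) ^ k * ((a + k).choose k * (a + b + c + 1).choose (b - k) : ℕ) : ℤ) * X ^ k

theorem jPoly_coeff (a b c k : ℕ) : (jPoly a b c).coeff k =
    if k ≤ b then (-1 : ℤ) ^ k * (((a + k).choose k * (a + b + c + 1).choose (b - k) : ℕ) : ℤ) else 0 := by
  simp only [jPoly, finsetSum_coeff, coeff_C_mul, coeff_X_pow, mul_ite, mul_one, mul_zero]
  rw [Finset.sum_ite_eq]
  simp

theorem jPoly_natDegree (a b c : ℕ) : (jPoly a b c).natDegree ≤ b := by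
  rw [natDegree_le_iff_coeff_eq_zero]
  intro k hk
  rw [jPoly_coeff, if_neg (by lia)]

theorem jPoly_integral (a b c : ℕ) (z : ℝ) :
    aeval z (jPoly a b c) = ((a + b + c + 1).factorial : ℝ) /
      (a.factorial * b.factorial * c.factorial) *
      ∫ t in (0:ℝ)..1, t ^ a * (1 - t) ^ c * (1 - z * t) ^ b := by
  have h : ∀ t : ℝ, t ^ a * (1 - t) ^ c * (1 - z * t) ^ b =
      ∑ k ∈ Finset.range (b + 1), ((-1) ^ k * b.choose k * z ^ k) * (t ^ (a + k) * (1 - t) ^ c) := by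
    intro t
    rw [sub_eq_neg_add, sub_eq_neg_add 1 (z * t), add_pow (-(z * t)), Finset.mul_sum]
    refine Finset.sum_congr rfl fun k _ => ?_
    rw [neg_pow (z * t)]
    ring
  simp_rw [h]
  rw [intervalIntegral.integral_finsetSum]
  swap
  · intro i _; apply Continuous.intervalIntegrable; fun_prop
  rw [Finset.mul_sum, jPoly, map_sum]
  refine Finset.sum_congr rfl fun k hk => ?_
  rw [intervalIntegral.integral_const_mul, beta_nat]
  have hk : k ≤ b := by simpa [Nat.lt_succ_iff] using hk
  simp only [map_mul, aeval_C, map_pow, aeval_X]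
  have e1 := Nat.choose_mul_factorial_mul_factorial hk
  have e2 := Nat.choose_mul_factorial_mul_factorial (show k ≤ a + k by lia)
  have e3 := Nat.choose_mul_factorial_mul_factorial (show b - k ≤ a + b + c + 1 by lia)
  rw [show a + k - k = a by lia] at e2
  rw [show a + b + c + 1 - (b - k) = a + k + c + 1 by lia] at e3
  rw [← e1, ← e2, ← e3]
  push_cast
  have hb : (b.choose k : ℝ) ≠ 0 := by exact_mod_cast (Nat.choose_pos hk).ne'
  field_simp

theorem two_pow_bound (N : ℕ) : N + 2 ≤ 2 ^ (N + 1) := by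
  have := Nat.lt_two_pow_self (n := N+1); lia

theorem jPoly_coeff_bound (a b c k : ℕ) : |(jPoly a b c).coeff k| ≤ 2 ^ (a + b) * 2 ^ (a + b + c + 1) := by
  rw [jPoly_coeff]
  split_ifs with h
  · rw [abs_mul, abs_pow, abs_neg, abs_one, one_pow, one_mul, Nat.abs_cast]
    have h1 := Nat.choose_le_two_pow (a + k) k
    have h2 := Nat.choose_le_two_pow (a + b + c + 1) (b - k)
    have h3 : 2 ^ (a + k) ≤ 2 ^ (a + b) := Nat.pow_le_pow_right (by norm_num) (by lia)
    exact_mod_cast Nat.mul_le_mul (h1.trans h3) h2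
  · simp

theorem one_sub_X_pow_coeff_bound (k i : ℕ) : |((1 - X : ℤ[X]) ^ k).coeff i| ≤ 2 ^ k := by
  induction k generalizing i with
  | zero => simp [coeff_one]; split_ifs <;> simp
  | succ k ih =>
    rw [pow_succ, mul_sub, mul_one, coeff_sub]
    cases i with
    | zero =>
      rw [coeff_mul_X_zero, sub_zero]
      exact (ih 0).trans (pow_le_pow_right₀ (by norm_num) (Nat.le_succ k))
    | succ i =>
      rw [coeff_mul_X]
      have := abs_sub (((1 - X : ℤ[X]) ^ k).coeff (i+1)) (((1 - X : ℤ[X]) ^ k).coeff i)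
      have := ih (i+1)
      have := ih i
      rw [pow_succ]; lia

theorem comp_coeff_bound (p : ℤ[X]) (n : ℕ) (M : ℤ) (hn : p.natDegree ≤ n) (hM : ∀ k, |p.coeff k| ≤ M)
    (i : ℕ) : |(p.comp (1 - X)).coeff i| ≤ (n + 1) * (M * 2 ^ n) := by
  rw [comp, eval₂_eq_sum_range' C (show p.natDegree < n + 1 by lia), finsetSum_coeff]
  refine (Finset.abs_sum_le_sum_abs _ _).trans ?_
  have : ∀ k ∈ Finset.range (n + 1), |(C (p.coeff k) * (1 - X) ^ k).coeff i| ≤ M * 2 ^ n := by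
    intro k hk
    rw [coeff_C_mul, abs_mul]
    refine mul_le_mul (hM k) ((one_sub_X_pow_coeff_bound k i).trans ?_) (abs_nonneg _) ((abs_nonneg _).trans (hM k))
    exact pow_le_pow_right₀ (by norm_num) (by simpa [Nat.lt_succ_iff] using hk)
  refine (Finset.sum_le_sum this).trans ?_
  simp

/-- The cofactor of `z ^ (a + c + 1)` in `pade_identity`: a multiple of the integral of
`τ ^ a (1 - τ) ^ b (z - τ) ^ c` over `[0, z]`, divided by `z ^ (a + c + 1)`. -/
noncomputable def padeR (a b c : ℕ) : ℤ[X] := jPoly a b c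
/-- The cofactor of `(1 - z) ^ (b + c + 1)` in `pade_identity`, coming from the integral over
`[z, 1]`. -/
noncomputable def padeQ (a b c : ℕ) : ℤ[X] := (-1) ^ c * (jPoly b a c).comp (1 - X)
/-- The left-hand side of `pade_identity`, coming from the integral over `[0, 1]`. -/
noncomputable def padeP (a b c : ℕ) : ℤ[X] := reflect c (jPoly a c b)

/-- Additivity of the integral of `τ ^ a (1 - τ) ^ b (z - τ) ^ c` for the splitting of `[0, 1]`
at `z`. -/
theorem pade_identity_real (a b c : ℕ) (z : ℝ) (hz : z ≠ 0) :
    aeval z (padeP a b c) = (1 - z) ^ (b + c + 1) * aeval z (padeQ a b c) +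
      z ^ (a + c + 1) * aeval z (padeR a b c) := by
  set L : ℝ := ((a + b + c + 1).factorial : ℝ) / (a.factorial * b.factorial * c.factorial) with hL
  set f : ℝ → ℝ := fun τ => τ ^ a * (1 - τ) ^ b * (z - τ) ^ c with hf
  have hfi : ∀ u v : ℝ, IntervalIntegrable f MeasureTheory.volume u v := by
    intro u v; apply Continuous.intervalIntegrable; fun_prop
  have hR : z ^ (a + c + 1) * aeval z (padeR a b c) = L * ∫ τ in (0:ℝ)..z, f τ := by
    rw [padeR, jPoly_integral]
    have h := intervalIntegral.smul_integral_comp_mul_left (a := 0) (b := 1) f z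
    rw [mul_zero, mul_one] at h
    rw [← h, smul_eq_mul, mul_left_comm]
    congr 1
    rw [← intervalIntegral.integral_const_mul, ← intervalIntegral.integral_const_mul]
    refine intervalIntegral.integral_congr fun t _ => ?_
    simp only [hf]
    rw [show z - z * t = z * (1 - t) by ring, mul_pow, mul_pow]
    ring
  have hQ : (1 - z) ^ (b + c + 1) * aeval z (padeQ a b c) = L * ∫ τ in z..1, f τ := by
    rw [padeQ, map_mul, aeval_comp, jPoly_integral]
    have h := intervalIntegral.smul_integral_comp_mul_left (a := 0) (b := 1)
      (fun x : ℝ => f (1 - x)) (1 - z)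
    rw [intervalIntegral.integral_comp_sub_left] at h
    rw [show (1:ℝ) - (1 - z) * 1 = z by ring, show (1:ℝ) - (1 - z) * 0 = 1 by ring] at h
    rw [← h, hL, smul_eq_mul, show b + a + c + 1 = a + b + c + 1 by ring,
      mul_comm (b.factorial : ℝ)]
    simp only [map_pow, map_neg, map_one, map_sub, aeval_X]
    have : ∀ (x y l i j : ℝ), i = y * j → x * (y * (l * j)) = l * (x * i) := by
      intro x y l i j h; rw [h]; ring
    rw [show (1 - z) ^ (b + c + 1) = (1 - z) * (1 - z) ^ (b + c) by ring, mul_assoc,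
      mul_left_comm L]
    congr 1
    rw [mul_left_comm _ L, mul_left_comm _ L, ← mul_assoc ((1 - z) ^ _),
      ← intervalIntegral.integral_const_mul]
    congr 1
    refine intervalIntegral.integral_congr fun t _ => ?_
    simp only [hf]
    rw [show 1 - (1 - (1 - z) * t) = (1 - z) * t by ring,
      show z - (1 - (1 - z) * t) = (-1) * ((1 - z) * (1 - t)) by ring, mul_pow, mul_pow, mul_pow]
    ring
  have hP : aeval z (padeP a b c) = L * ∫ τ in (0:ℝ)..1, f τ := by
    have hz' : z⁻¹ ≠ 0 := inv_ne_zero hz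
    let _ : Invertible z⁻¹ := invertibleOfNonzero hz'
    have h := eval₂_reflect_mul_pow (algebraMap ℤ ℝ) z⁻¹ c (jPoly a c b) (jPoly_natDegree _ _ _)
    rw [invOf_eq_inv, inv_inv, ← aeval_def, ← aeval_def, jPoly_integral] at h
    have h2 : aeval z (padeP a b c) = z ^ c * (aeval z (padeP a b c) * z⁻¹ ^ c) := by
      rw [mul_left_comm, ← mul_pow, mul_inv_cancel₀ hz, one_pow, mul_one]
    rw [h2, padeP, h, hL, show a + c + b + 1 = a + b + c + 1 by ring,
      mul_right_comm (a.factorial : ℝ), mul_left_comm, ← intervalIntegral.integral_const_mul]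
    congr 1
    refine intervalIntegral.integral_congr fun t _ => ?_
    simp only [hf]
    rw [show z - t = z * (1 - z⁻¹ * t) by field_simp, mul_pow]
    ring
  rw [hP, hR, hQ, ← mul_add, add_comm, intervalIntegral.integral_add_adjacent_intervals (hfi _ _) (hfi _ _)]

theorem pade_identity (a b c : ℕ) :
    padeP a b c = (1 - X) ^ (b + c + 1) * padeQ a b c + X ^ (a + c + 1) * padeR a b c := by
  have hinj : Function.Injective (Polynomial.map (algebraMap ℤ ℝ)) :=
    map_injective _ (algebraMap ℤ ℝ).injective_int
  apply hinj
  apply eq_of_infinite_eval_eq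
  refine Set.Infinite.mono (s := {0}ᶜ) ?_ (Set.Finite.infinite_compl (Set.finite_singleton 0))
  intro z hz
  have := pade_identity_real a b c z hz
  simp only [aeval_def] at this
  simpa [eval_map] using this

theorem padeP_natDegree (a b c : ℕ) : (padeP a b c).natDegree = c := by
  apply natDegree_eq_of_le_of_coeff_ne_zero
  · exact (natDegree_reflect_le).trans (max_le le_rfl (jPoly_natDegree _ _ _))
  · rw [padeP, coeff_reflect, revAt_le le_rfl, Nat.sub_self, jPoly_coeff, if_pos (Nat.zero_le _)]
    have : (a + c + b + 1).choose c ≠ 0 := (Nat.choose_pos (by lia)).ne'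
    simpa using this

theorem jPoly_natDegree_eq (a b c : ℕ) : (jPoly a b c).natDegree = b := by
  apply natDegree_eq_of_le_of_coeff_ne_zero (jPoly_natDegree _ _ _)
  rw [jPoly_coeff, if_pos le_rfl]
  have : (a + b).choose b ≠ 0 := (Nat.choose_pos (by lia)).ne'
  simpa using this

theorem padeQ_natDegree (a b c : ℕ) : (padeQ a b c).natDegree = a := by
  have h : (1 - X : ℤ[X]).natDegree = 1 := by
    rw [show (1 - X : ℤ[X]) = - (X - C 1) by simp, natDegree_neg, natDegree_X_sub_C]
  have : (padeQ a b c).natDegree = ((jPoly b a c).comp (1 - X)).natDegree := by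
    rw [padeQ]
    rcases neg_one_pow_eq_or ℤ[X] c with h | h <;> rw [h] <;> simp
  rw [this, natDegree_comp, h, jPoly_natDegree_eq, mul_one]

theorem padeP_coeff_bound (a b c k : ℕ) : |(padeP a b c).coeff k| ≤ 2 ^ (a + c) * 2 ^ (a + b + c + 1) := by
  rw [padeP, coeff_reflect]
  refine (jPoly_coeff_bound _ _ _ _).trans (le_of_eq ?_)
  ring

theorem padeQ_coeff_bound (a b c k : ℕ) : |(padeQ a b c).coeff k| ≤
    (a + 1) * (2 ^ (a + b) * 2 ^ (a + b + c + 1) * 2 ^ a) := by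
  have h1 := comp_coeff_bound (jPoly b a c) a _ (jPoly_natDegree _ _ _) (jPoly_coeff_bound _ _ _) k
  have h2 : |(padeQ a b c).coeff k| = |((jPoly b a c).comp (1 - X)).coeff k| := by
    rw [padeQ]
    rcases neg_one_pow_eq_or ℤ[X] c with h | h <;> rw [h] <;> simp
  rw [h2]
  refine h1.trans (le_of_eq ?_)
  ring

theorem pade_bounds (N a b c : ℕ) (ha : a ≤ N + 1) (hb : b ≤ N + 1) (hc : c ≤ N) :
    ∀ F ∈ [padeP a b c, padeQ a b c, padeR a b c],
      F.natDegree ≤ N + 1 ∧ ∀ k, |F.coeff k| ≤ 2 ^ (7 * (N + 1)) := by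
  have hN : (a : ℤ) + 1 ≤ 2 ^ (N + 1) := by
    have := two_pow_bound N
    have h : a + 1 ≤ 2 ^ (N + 1) := by lia
    exact_mod_cast h
  have key : ∀ e : ℕ, e ≤ 7 * (N + 1) → (2:ℤ) ^ e ≤ 2 ^ (7 * (N + 1)) := fun e he =>
    pow_le_pow_right₀ (by norm_num) he
  intro F hF
  simp only [List.mem_cons, List.not_mem_nil, or_false] at hF
  rcases hF with rfl | rfl | rfl
  · refine ⟨by rw [padeP_natDegree]; lia, fun k => (padeP_coeff_bound a b c k).trans ?_⟩
    rw [← pow_add]; exact key _ (by lia)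
  · refine ⟨by rw [padeQ_natDegree]; lia, fun k => (padeQ_coeff_bound a b c k).trans ?_⟩
    refine (mul_le_mul_of_nonneg_right hN (by positivity)).trans ?_
    rw [← pow_add, ← pow_add, ← pow_add]; exact key _ (by lia)
  · refine ⟨(jPoly_natDegree _ _ _).trans hb, fun k => (jPoly_coeff_bound a b c k).trans ?_⟩
    rw [← pow_add]; exact key _ (by lia)

/-- Two Padé approximations with the same weight `2 N + 1`, of degree about `N` and with
coefficients of exponential size, which are independent: their determinant is a nonzero multiple of
a power of `X`. -/
theorem pade_exists (N : ℕ) (hN : 1 ≤ N) : ∃ P Q R P' Q' R' : ℤ[X],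
    (∀ F ∈ [P, Q, R, P', Q', R'], F.natDegree ≤ N + 1 ∧ ∀ k, |F.coeff k| ≤ 2 ^ (7 * (N + 1))) ∧
    P = (1 - X) ^ (2 * N + 1) * Q + X ^ (2 * N + 1) * R ∧
    P' = (1 - X) ^ (2 * N + 1) * Q' + X ^ (2 * N + 1) * R' ∧
    ∃ c : ℤ, c ≠ 0 ∧ P * Q' - P' * Q = C c * X ^ (2 * N + 1) := by
  obtain ⟨n, rfl⟩ : ∃ n, N = n + 1 := ⟨N - 1, by lia⟩
  have i1 := pade_identity (n + 1) (n + 1) (n + 1)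
  have i2 := pade_identity (n + 2) (n + 2) n
  have b1 := pade_bounds (n + 1) (n + 1) (n + 1) (n + 1) (by lia) (by lia) (by lia)
  have b2 := pade_bounds (n + 1) (n + 2) (n + 2) n (by lia) (by lia) (by lia)
  set P := padeP (n + 1) (n + 1) (n + 1) with hP
  set Q := padeQ (n + 1) (n + 1) (n + 1)
  set R := padeR (n + 1) (n + 1) (n + 1)
  set P' := padeP (n + 2) (n + 2) n
  set Q' := padeQ (n + 2) (n + 2) n
  set R' := padeR (n + 2) (n + 2) n
  have dP : P.natDegree = n + 1 := padeP_natDegree _ _ _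
  have dP' : P'.natDegree = n := padeP_natDegree _ _ _
  have dQ : Q.natDegree = n + 1 := padeQ_natDegree _ _ _
  have dQ' : Q'.natDegree = n + 2 := padeQ_natDegree _ _ _
  have hP0 : P ≠ 0 := by intro h; rw [h] at dP; simp at dP
  have hQ0 : Q' ≠ 0 := by intro h; rw [h] at dQ'; simp at dQ'
  rw [show n + 1 + (n + 1) + 1 = 2 * (n + 1) + 1 by ring] at i1
  rw [show n + 2 + n + 1 = 2 * (n + 1) + 1 by ring] at i2
  refine ⟨P, Q, R, P', Q', R', ?_, i1, i2, ?_⟩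
  · intro F hF
    simp only [List.mem_cons, List.not_mem_nil, or_false] at hF b1 b2
    rcases hF with h | h | h | h | h | h
    · exact b1 F (by tauto)
    · exact b1 F (by tauto)
    · exact b1 F (by tauto)
    · exact b2 F (by tauto)
    · exact b2 F (by tauto)
    · exact b2 F (by tauto)
  · have e : P * Q' - P' * Q = X ^ (2 * (n + 1) + 1) * (R * Q' - R' * Q) := by
      rw [i1, i2]; ring
    have d1 : (P * Q').natDegree = 2 * (n + 1) + 1 := by
      rw [natDegree_mul hP0 hQ0, dP, dQ']; ring
    have d2 : (P * Q' - P' * Q).natDegree = 2 * (n + 1) + 1 := by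
      rw [natDegree_sub_eq_left_of_natDegree_lt, d1]
      rw [d1]
      refine (natDegree_mul_le).trans_lt ?_
      rw [dP', dQ]; lia
    have hne : R * Q' - R' * Q ≠ 0 := by
      intro h; rw [e, h] at d2; simp at d2
    have d3 : (R * Q' - R' * Q).natDegree = 0 := by
      rw [e, natDegree_mul (pow_ne_zero _ X_ne_zero) hne, natDegree_X_pow] at d2
      lia
    obtain ⟨c, hc⟩ := natDegree_eq_zero.1 d3
    refine ⟨c, ?_, ?_⟩
    · rintro rfl; apply hne; rw [← hc]; simp
    · rw [e, ← hc]; ring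

/-! ### The gap principle for heights -/

section heights
open Height NumberField

theorem infinitePlace_intCast {K : Type*} [Field K] (v : InfinitePlace K) (n : ℤ) : v (n : K) = |(n : ℝ)| := by
  rw [← InfinitePlace.norm_embedding_eq v, map_intCast, Complex.norm_intCast]

variable {K : Type*} [Field K] [NumberField K]

theorem mulHeight_int_le {ι : Type*} [Finite ι] (x : ι → ℤ) (M : ℝ) (hM : 1 ≤ M)
    (h : ∀ i, |(x i : ℝ)| ≤ M) : mulHeight (fun i => (x i : K)) ≤ M ^ totalWeight K := by
  by_cases hx : x = 0
  · subst hx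
    simpa using one_le_pow₀ hM
  obtain ⟨i₀, hi₀⟩ := Function.ne_iff.1 hx
  have : Nonempty ι := ⟨i₀⟩
  have hx0 : (fun i => (x i : K)) ≠ 0 := Function.ne_iff.2 ⟨i₀, by simpa using hi₀⟩
  have hx1 : (fun i => (x i : 𝓞 K)) ≠ 0 := Function.ne_iff.2 ⟨i₀, by simpa using hi₀⟩
  rw [NumberField.mulHeight_eq hx0]
  have h1 := absNorm_mul_finprod_finitePlace_eq_one hx1
  simp only [map_intCast] at h1
  set F := ∏ᶠ v : FinitePlace K, ⨆ i, v (x i : K) with hF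
  have hA : (1 : ℝ) ≤ (Ideal.span (Set.range fun i => (x i : 𝓞 K))).absNorm := by
    rcases Nat.eq_zero_or_pos (Ideal.span (Set.range fun i => (x i : 𝓞 K))).absNorm with h0 | h0
    · rw [h0] at h1; simp at h1
    · exact_mod_cast h0
  have hF0 : 0 ≤ F := finprod_nonneg fun _ ↦ Real.iSup_nonneg_of_nonnegHomClass ..
  have hF1 : F ≤ 1 := by nlinarith
  have hP0 : 0 ≤ ∏ v : InfinitePlace K, (⨆ i, v (x i : K)) ^ v.mult :=
    Finset.prod_nonneg fun v _ => pow_nonneg (Real.iSup_nonneg_of_nonnegHomClass ..) _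
  have hP : ∏ v : InfinitePlace K, (⨆ i, v (x i : K)) ^ v.mult ≤ M ^ totalWeight K := by
    rw [totalWeight_eq_sum_mult, ← Finset.prod_pow_eq_pow_sum]
    refine Finset.prod_le_prod (fun v _ => pow_nonneg (Real.iSup_nonneg_of_nonnegHomClass ..) _)
      fun v _ => ?_
    refine pow_le_pow_left₀ (Real.iSup_nonneg_of_nonnegHomClass ..) (ciSup_le fun i => ?_) _
    rw [infinitePlace_intCast]; exact h i
  calc _ ≤ (∏ v : InfinitePlace K, (⨆ i, v (x i : K)) ^ v.mult) * 1 := by gcongr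
    _ ≤ _ := by rw [mul_one]; exact hP

theorem mulHeight_powers_le (z : K) (d : ℕ) :
    mulHeight (fun i : Fin (d + 1) => z ^ (i : ℕ)) ≤ mulHeight₁ z ^ d := by
  have h := mulHeight_fun_prod_eq (K := K) (α := Fin d) (ι := fun _ => Fin 2)
    (x := fun _ => ![z, 1]) (fun a => by intro h; simpa using congrFun h 1)
  rw [Finset.prod_const, ← mulHeight₁_eq_mulHeight, Finset.card_univ, Fintype.card_fin] at h
  rw [← h]
  refine le_of_eq_of_le ?_ (mulHeight_comp_le
    (fun (i : Fin (d + 1)) => fun (k : Fin d) => if (k : ℕ) < i then (0 : Fin 2) else 1) _)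
  congr 1
  funext i
  simp only [Function.comp]
  have : ∀ k : Fin d, (![z, 1] : Fin 2 → K) (if (k : ℕ) < i then 0 else 1) =
      if (k : ℕ) < i then z else 1 := by
    intro k; split_ifs <;> rfl
  simp_rw [this]
  rw [Finset.prod_ite, Finset.prod_const, Finset.prod_const_one, mul_one]
  congr 1
  rw [Fin.card_filter_val_lt]
  have := i.2
  lia

/-- The height of the values at `z` of integer polynomials of degree at most `d`. -/
theorem mulHeight_intPoly_le {m : ℕ} (F : Fin m → ℤ[X]) (d : ℕ) (M : ℝ) (hM : 1 ≤ M)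
    (hd : ∀ i, (F i).natDegree ≤ d) (hc : ∀ i k, |((F i).coeff k : ℝ)| ≤ M) (z : K) :
    mulHeight (fun i => aeval z (F i)) ≤
      (d + 1 : ℝ) ^ totalWeight K * M ^ totalWeight K * mulHeight₁ z ^ d := by
  have h := mulHeight_linearMap_apply_le (K := K)
    (fun p : Fin m × Fin (d + 1) => (((F p.1).coeff p.2 : ℤ) : K)) (fun i : Fin (d + 1) => z ^ (i : ℕ))
  have e : (fun i => aeval z (F i)) =
      fun j => ∑ i : Fin (d + 1), (((F j).coeff i : ℤ) : K) * z ^ (i : ℕ) := by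
    funext j
    rw [aeval_def, eval₂_eq_sum_range' _ (Nat.lt_succ_of_le (hd j)), Finset.sum_range]
    simp
  rw [e]
  refine h.trans ?_
  have h1 := mulHeight_powers_le z d
  have h2 := mulHeight_int_le (K := K) (fun p : Fin m × Fin (d + 1) => (F p.1).coeff p.2) M hM
    (fun p => hc _ _)
  simp only [Nat.card_eq_fintype_card, Fintype.card_fin]
  push_cast
  gcongr

/-- The matrix of the linear map taking the tensor `(l, m, 1) ⊗ (R, Q, P)` to
`(Q - m P, l Q - m R)`, which is proportional to `(z ^ s, 1)` in `height_gap_aux`. -/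
noncomputable def padeMat (K : Type*) [Field K] : Fin 2 × (Fin 3 × Fin 3) → K := fun p =>
  ![![![0, 0, 0], ![0, 0, -1], ![0, 1, 0]], ![![0, 1, 0], ![-1, 0, 0], ![0, 0, 0]]] p.1 p.2.1 p.2.2

/-- The pair `(z ^ s, (1 - z) ^ s)` solves the linear system given by the Padé identity `hid` and the
equation `hlm`, so the height of `z` is bounded by those of the coefficients, provided that the
determinant of the system does not vanish. -/
theorem height_gap_aux {P Q R l m z : K} {s : ℕ} (hid : P = (1 - z) ^ s * Q + z ^ s * R)
    (hlm : l * z ^ s + m * (1 - z) ^ s = 1) (hk : l * Q - m * R ≠ 0) :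
    mulHeight₁ z ^ s ≤ 9 ^ totalWeight K * mulHeight (padeMat K) *
      (mulHeight₁ l * mulHeight₁ m * mulHeight ![R, Q, P]) := by
  set κ := l * Q - m * R with hκ
  have hx : (![l, m, 1] : Fin 3 → K) ≠ 0 := by intro h; simpa using congrFun h 2
  have hy : (![R, Q, P] : Fin 3 → K) ≠ 0 := by
    intro h
    have h0 := congrFun h 0
    have h1 := congrFun h 1
    simp at h0 h1
    apply hk; rw [hκ, h0, h1]; ring
  have e1 : mulHeight₁ z ^ s = mulHeight ![κ * z ^ s, κ] := by
    rw [← mulHeight₁_pow, mulHeight₁_eq_mulHeight, ← mulHeight_smul_eq_mulHeight _ hk]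
    simp
  have e2 : (![κ * z ^ s, κ] : Fin 2 → K) = fun j => ∑ i : Fin 3 × Fin 3,
      padeMat K (j, i) * ((![l, m, 1] : Fin 3 → K) i.1 * (![R, Q, P] : Fin 3 → K) i.2) := by
    funext j
    rw [Fintype.sum_prod_type]
    fin_cases j
    · simp [Fin.sum_univ_three, padeMat]
      rw [hκ, hid]
      linear_combination Q * hlm
    · simp [Fin.sum_univ_three, padeMat]
      rw [hκ]; ring
  have h := mulHeight_linearMap_apply_le (padeMat K)
    (fun i : Fin 3 × Fin 3 => (![l, m, 1] : Fin 3 → K) i.1 * (![R, Q, P] : Fin 3 → K) i.2)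
  rw [← e2, ← e1, mulHeight_fun_mul_eq hx hy] at h
  have h3 : mulHeight (![l, m, 1] : Fin 3 → K) ≤ mulHeight₁ l * mulHeight₁ m := by
    rw [mulHeight₁_eq_mulHeight, mulHeight₁_eq_mulHeight, ← mulHeight_fun_mul_eq
      (by intro h; simpa using congrFun h 1) (by intro h; simpa using congrFun h 1)]
    refine le_of_eq_of_le ?_ (mulHeight_comp_le (![(0, 1), (1, 0), (1, 1)] : Fin 3 → Fin 2 × Fin 2) _)
    congr 1
    funext i
    fin_cases i <;> simp
  refine h.trans ?_
  have := mulHeight_pos (![R, Q, P] : Fin 3 → K)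
  have := mulHeight_pos (padeMat K)
  simp only [Nat.card_eq_fintype_card, Fintype.card_prod, Fintype.card_fin]
  push_cast
  gcongr

/-- The gap principle: `w` and `1 - w` cannot both be close to `z ^ (2 N + 1)` and
`(1 - z) ^ (2 N + 1)`, in the sense that the quotients cannot both have small height. One of two
independent Padé approximations has a nonvanishing determinant. -/
theorem height_gap (K : Type*) [Field K] [NumberField K] : ∃ c : ℝ, 0 ≤ c ∧
    ∀ (N : ℕ) (z w : K), 1 ≤ N → z ≠ 0 → 1 - z ≠ 0 →
      N * logHeight₁ z ≤ logHeight₁ (w / z ^ (2 * N + 1)) +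
        logHeight₁ ((1 - w) / (1 - z) ^ (2 * N + 1)) + c * (N + 1) := by
  obtain ⟨T, hT⟩ : ∃ T, T = totalWeight K := ⟨_, rfl⟩
  obtain ⟨C0, hC0⟩ : ∃ C0 : ℝ, C0 = 9 ^ totalWeight K * mulHeight (padeMat K) := ⟨_, rfl⟩
  have hC0p : 1 ≤ C0 := by
    rw [hC0]
    exact one_le_mul_of_one_le_of_one_le (one_le_pow₀ (by norm_num)) (one_le_mulHeight _)
  refine ⟨Real.log C0 + (Real.log 2) * (8 * T), ?_, ?_⟩
  · have := Real.log_nonneg hC0p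
    have := Real.log_nonneg (show (1:ℝ) ≤ 2 by norm_num)
    positivity
  intro N z w hN hz hz1
  set l := w / z ^ (2 * N + 1) with hl
  set m := (1 - w) / (1 - z) ^ (2 * N + 1) with hm
  have hlm : l * z ^ (2 * N + 1) + m * (1 - z) ^ (2 * N + 1) = 1 := by
    rw [hl, hm]; field_simp; ring
  obtain ⟨P, Q, R, P', Q', R', hb, h1, h2, c, hc, hdet⟩ := pade_exists N hN
  have key : ∀ P Q R : ℤ[X], (∀ F ∈ [P, Q, R], F.natDegree ≤ N + 1 ∧ ∀ k, |F.coeff k| ≤ 2 ^ (7 * (N + 1))) →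
      P = (1 - X) ^ (2 * N + 1) * Q + X ^ (2 * N + 1) * R →
      l * aeval z Q - m * aeval z R ≠ 0 →
      N * logHeight₁ z ≤ logHeight₁ l + logHeight₁ m + (Real.log C0 + (Real.log 2) * (8 * T)) * (N + 1) := by
    intro P Q R hb hid hk
    have hid' := congrArg (aeval z) hid
    simp only [map_add, map_mul, map_pow, map_sub, map_one, aeval_X] at hid'
    have g1 := height_gap_aux hid' hlm hk
    have hM : (1 : ℝ) ≤ 2 ^ (7 * (N + 1)) := one_le_pow₀ (by norm_num)
    have g2 := mulHeight_intPoly_le ![R, Q, P] (N + 1) (2 ^ (7 * (N + 1))) hM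
      (by intro i; fin_cases i <;> simp at hb ⊢ <;> tauto)
      (by
        intro i k
        have : |(![R, Q, P] i).coeff k| ≤ 2 ^ (7 * (N + 1)) := by
          fin_cases i <;> simp at hb ⊢ <;> tauto
        exact_mod_cast this) z
    have e : (fun i => aeval z ((![R, Q, P] : Fin 3 → ℤ[X]) i)) = ![aeval z R, aeval z Q, aeval z P] := by
      funext i; fin_cases i <;> rfl
    rw [e] at g2
    have hN2 : ((N + 1 : ℕ) + 1 : ℝ) ≤ 2 ^ (N + 1) := by
      have := two_pow_bound N
      exact_mod_cast this
    have g3 : mulHeight₁ z ^ (2 * N + 1) ≤ C0 * (mulHeight₁ l * mulHeight₁ m *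
        (2 ^ (8 * T * (N + 1)) * mulHeight₁ z ^ (N + 1))) := by
      rw [show (2:ℝ) ^ (8 * T * (N + 1)) = (2 ^ (N + 1)) ^ T * (2 ^ (7 * (N + 1))) ^ T by
        rw [← pow_mul, ← pow_mul, ← pow_add]; congr 1; ring, hC0, hT]
      refine g1.trans ?_
      have := mulHeight₁_pos l
      have := mulHeight₁_pos m
      have := mulHeight₁_pos z
      gcongr
      refine g2.trans ?_
      gcongr
    have hz0 := mulHeight₁_pos z
    have hl0 := mulHeight₁_pos l
    have hm0 := mulHeight₁_pos m
    have g4 := Real.log_le_log (by positivity) g3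
    rw [Real.log_mul (by positivity) (by positivity), Real.log_mul (by positivity) (by positivity),
      Real.log_mul (by positivity) (by positivity), Real.log_mul (by positivity) (by positivity)] at g4
    simp only [Real.log_pow, ← logHeight₁_eq_log_mulHeight₁] at g4
    push_cast at g4
    have := Real.log_nonneg hC0p
    nlinarith [mul_nonneg this (Nat.cast_nonneg (α := ℝ) N)]
  by_cases hk : l * aeval z Q - m * aeval z R = 0
  · refine key P' Q' R' (fun F hF => hb F (by simp at hF ⊢; tauto)) h2 ?_
    intro hk'
    have q1 := congrArg (aeval z) h1
    have q2 := congrArg (aeval z) h2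
    have q3 := congrArg (aeval z) hdet
    simp only [map_add, map_mul, map_pow, map_sub, map_one, aeval_X, aeval_C] at q1 q2 q3
    have r1 : aeval z Q = m * aeval z P := by rw [q1]; linear_combination z ^ (2 * N + 1) * hk - aeval z Q * hlm
    have r2 : aeval z Q' = m * aeval z P' := by rw [q2]; linear_combination z ^ (2 * N + 1) * hk' - aeval z Q' * hlm
    rw [r1, r2] at q3
    have : (algebraMap ℤ K) c * z ^ (2 * N + 1) = 0 := by rw [← q3]; ring
    rcases mul_eq_zero.1 this with h | h
    · simp at h; exact hc h
    · exact hz (pow_eq_zero_iff (by lia) |>.1 h)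
  · exact key P Q R (fun F hF => hb F (by simp at hF ⊢; tauto)) h1 hk

end heights

/-! ### The `S`-unit equation -/

section sunits
open Height NumberField

variable {K : Type*} [Field K] [NumberField K]

/-- `x` is a unit away from the finite set `S` of finite places. -/
def IsSUnit (S : Finset (FinitePlace K)) (x : K) : Prop :=
  x ≠ 0 ∧ ∀ v : FinitePlace K, v ∉ S → v x = 1

/-- The logarithmic embedding: the normalised logarithms of the absolute values at the infinite
places and at the places in `S`. -/
noncomputable def logEmb (S : Finset (FinitePlace K)) (x : K) : InfinitePlace K ⊕ S → ℝ :=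
  Sum.elim (fun v => v.mult * Real.log (v x)) (fun v => Real.log (v.1 x))

theorem IsSUnit.div_pow {S : Finset (FinitePlace K)} {x y : K} (hx : IsSUnit S x) (hy : IsSUnit S y)
    (s : ℕ) : IsSUnit S (x / y ^ s) := by
  refine ⟨div_ne_zero hx.1 (pow_ne_zero _ hy.1), fun v hv => ?_⟩
  rw [map_div₀, map_pow, hx.2 v hv, hy.2 v hv]; simp

theorem IsSUnit.inv {S : Finset (FinitePlace K)} {x : K} (hx : IsSUnit S x) : IsSUnit S x⁻¹ := by
  refine ⟨inv_ne_zero hx.1, fun v hv => ?_⟩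
  rw [map_inv₀, hx.2 v hv]; simp

theorem logEmb_div_pow {S : Finset (FinitePlace K)} {x y : K} (hx : x ≠ 0) (hy : y ≠ 0) (s : ℕ) :
    logEmb S (x / y ^ s) = logEmb S x - (s : ℝ) • logEmb S y := by
  funext i
  rcases i with v | v
  · have h1 : v x ≠ 0 := by simpa using hx
    have h2 : v y ^ s ≠ 0 := by simpa using fun h => absurd h hy
    simp only [logEmb, Sum.elim_inl, Pi.sub_apply, Pi.smul_apply, smul_eq_mul, map_div₀, map_pow]
    rw [Real.log_div h1 h2, Real.log_pow]; ring
  · have h1 : v.1 x ≠ 0 := by simpa using hx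
    have h2 : v.1 y ^ s ≠ 0 := by simpa using fun h => absurd h hy
    simp only [logEmb, Sum.elim_inr, Pi.sub_apply, Pi.smul_apply, smul_eq_mul, map_div₀, map_pow]
    rw [Real.log_div h1 h2, Real.log_pow]

theorem logEmb_inv {S : Finset (FinitePlace K)} (x : K) :
    logEmb S x⁻¹ = - logEmb S x := by
  funext i
  rcases i with v | v
  · simp only [logEmb, Sum.elim_inl, Pi.neg_apply, map_inv₀, Real.log_inv]; ring
  · simp only [logEmb, Sum.elim_inr, Pi.neg_apply, map_inv₀, Real.log_inv]

theorem IsSUnit.logHeight_eq {S : Finset (FinitePlace K)} {x : K} (hx : IsSUnit S x) :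
    logHeight₁ x = ∑ i, max 0 (logEmb S x i) := by
  rw [NumberField.logHeight₁_eq, Fintype.sum_sum_type]
  congr 1
  · refine Finset.sum_congr rfl fun v _ => ?_
    simp only [logEmb, Sum.elim_inl, Real.posLog]
    rw [mul_max_of_nonneg _ _ (Nat.cast_nonneg _), mul_zero]
  · rw [finsum_eq_sum_of_support_subset (s := S)]
    · simp only [logEmb, Sum.elim_inr, Real.posLog]
      rw [← Finset.sum_coe_sort]
    · intro v hv
      by_contra h
      apply hv
      simp [hx.2 v h]

/-- On `S`-units the height and the norm of the logarithmic embedding are equivalent; this is the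
first inequality. It uses the height of the inverse. -/
theorem IsSUnit.norm_logEmb_le {S : Finset (FinitePlace K)} {x : K} (hx : IsSUnit S x) :
    ‖logEmb S x‖ ≤ logHeight₁ x := by
  have key : ∀ y : K, IsSUnit S y → ∀ i, logEmb S y i ≤ logHeight₁ y := by
    intro y hy i
    rw [hy.logHeight_eq]
    refine (le_max_right 0 _).trans ?_
    exact Finset.single_le_sum (f := fun i => max 0 (logEmb S y i)) (fun j _ => le_max_left 0 _)
      (Finset.mem_univ i)
  rw [pi_norm_le_iff_of_nonneg (zero_le_logHeight₁ x)]
  intro i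
  rw [Real.norm_eq_abs, abs_le]
  have h1 := key x hx i
  have h2 := key _ hx.inv i
  rw [logEmb_inv, logHeight₁_inv, Pi.neg_apply] at h2
  constructor <;> linarith

theorem IsSUnit.logHeight_le {S : Finset (FinitePlace K)} {x : K} (hx : IsSUnit S x) :
    logHeight₁ x ≤ Fintype.card (InfinitePlace K ⊕ S) * ‖logEmb S x‖ := by
  rw [hx.logHeight_eq]
  refine (Finset.sum_le_card_nsmul _ _ ‖logEmb S x‖ fun i _ => ?_).trans (by simp)
  refine max_le (norm_nonneg _) ((le_abs_self _).trans (norm_le_pi_norm (logEmb S x) i))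

/-- A bounded map from an infinite set to a proper space is nearly constant on some infinite subset. -/
theorem infinite_cluster {α E : Type*} [NormedAddCommGroup E] [ProperSpace E]
    (U : Set α) (hU : U.Infinite) (f : α → E) (C ε : ℝ) (hε : 0 < ε) (hC : ∀ x ∈ U, ‖f x‖ ≤ C) :
    ∃ V ⊆ U, V.Infinite ∧ ∀ x ∈ V, ∀ y ∈ V, ‖f x - f y‖ ≤ ε := by
  obtain ⟨t, -, ht, hcov⟩ := (isCompact_closedBall (0 : E) C).finite_cover_balls (half_pos hε)
  by_contra! hcon
  apply hU
  refine (ht.biUnion (t := fun b => {x ∈ U | f x ∈ Metric.ball b (ε / 2)}) fun b _ => ?_).subset ?_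
  · by_contra hinf
    obtain ⟨x, hx, y, hy, h⟩ := hcon _ (fun x hx => hx.1) hinf
    have h1 := hx.2
    have h2 := hy.2
    rw [mem_ball_iff_norm] at h1 h2
    have := norm_sub_le (f x - b) (f y - b)
    rw [sub_sub_sub_cancel_right] at this
    linarith
  · intro x hx
    have := hcov (show f x ∈ Metric.closedBall 0 C by simpa using hC x hx)
    simp only [Set.mem_iUnion, exists_prop] at this ⊢
    obtain ⟨b, hb, h⟩ := this
    exact ⟨b, hb, hx, h⟩

/-- The `S`-unit equation `u + v = 1` has finitely many solutions. Otherwise infinitely many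
solutions have nearly the same direction in the logarithmic embedding. Take two of these, `z` and
`w`, with `h(w) / h(z)` large: then `w` and `1 - w` are close to the powers of `z` and `1 - z` with
exponent about `h(w) / h(z)`, against `height_gap`. -/
theorem sunit_finite (S : Finset (FinitePlace K)) :
    {u : K | IsSUnit S u ∧ IsSUnit S (1 - u)}.Finite := by
  by_contra hinf
  obtain ⟨c, hc, hgap⟩ := height_gap K
  set n : ℝ := Fintype.card (InfinitePlace K ⊕ S) + 1 with hn
  have hn1 : 1 ≤ n := by rw [hn]; exact le_add_of_nonneg_left (Nat.cast_nonneg _)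
  obtain ⟨c1, hc1⟩ : ∃ c1 : ℝ, ∀ u : K, logHeight₁ (1 - u) ≤ c1 + logHeight₁ u := by
    refine ⟨totalWeight K * Real.log 2 + logHeight₁ (1 : K), fun u => logHeight₁_sub_le 1 u⟩
  -- The threshold beyond which heights absorb the constants of the gap principle.
  set H0 : ℝ := max (max c1 1) (8 * c + 1) with hH0
  have hnorth : ∀ b : ℝ, {a : K | logHeight₁ a ≤ b}.Finite := Northcott.finite_le
  set U : Set K := {u : K | IsSUnit S u ∧ IsSUnit S (1 - u)} \ {a : K | logHeight₁ a ≤ H0} with hU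
  have hUinf : U.Infinite := Set.Infinite.sdiff hinf (hnorth H0)
  set f : K → (InfinitePlace K ⊕ S → ℝ) × (InfinitePlace K ⊕ S → ℝ) := fun u =>
    ((logHeight₁ u)⁻¹ • logEmb S u, (logHeight₁ u)⁻¹ • logEmb S (1 - u)) with hf
  have hpos : ∀ u ∈ U, 0 < logHeight₁ u ∧ c1 ≤ logHeight₁ u ∧ 8 * c + 1 ≤ logHeight₁ u := by
    intro u hu
    have h : H0 < logHeight₁ u := by simpa using hu.2
    simp only [hH0, max_lt_iff] at h
    refine ⟨?_, ?_, ?_⟩ <;> linarith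
  have hbd : ∀ u ∈ U, ‖logEmb S u‖ ≤ 2 * logHeight₁ u ∧ ‖logEmb S (1 - u)‖ ≤ 2 * logHeight₁ u := by
    intro u hu
    obtain ⟨h1, h2, -⟩ := hpos u hu
    have h3 := hu.1.1.norm_logEmb_le
    have h4 := hu.1.2.norm_logEmb_le
    have h5 := hc1 u
    constructor <;> linarith
  have hfC : ∀ u ∈ U, ‖f u‖ ≤ 2 := by
    intro u hu
    obtain ⟨h1, -, -⟩ := hpos u hu
    obtain ⟨h2, h3⟩ := hbd u hu
    rw [hf, Prod.norm_def]
    simp only [norm_smul, norm_inv, Real.norm_eq_abs, abs_of_pos h1]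
    refine max_le ?_ ?_ <;> rw [inv_mul_le_iff₀ h1] <;> linarith
  obtain ⟨V, hVU, hVinf, hV⟩ := infinite_cluster U hUinf f 2 (1 / (32 * n)) (by positivity) hfC
  obtain ⟨z, hz⟩ := hVinf.nonempty
  obtain ⟨w, hw, hwz⟩ := (hVinf.sdiff (hnorth ((32 * n + 4) * logHeight₁ z))).nonempty
  have hwz : (32 * n + 4) * logHeight₁ z < logHeight₁ w := by simpa using hwz
  obtain ⟨hz0, -, hz8⟩ := hpos z (hVU hz)
  obtain ⟨hw0, -, -⟩ := hpos w (hVU hw)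
  have hzU := hVU hz
  have hwU := hVU hw
  set hz' := logHeight₁ z
  set hw' := logHeight₁ w
  set r := hw' / hz' with hr
  have hr0 : 32 * n + 4 < r := by rw [hr, lt_div_iff₀ hz0]; exact hwz
  have hrw : hw' = r * hz' := by rw [hr]; field_simp
  -- With this choice `2 N + 1` differs from `r = h(w) / h(z)` by at most one.
  set N := ⌊r / 2⌋₊ with hN
  have hN1 : (N : ℝ) ≤ r / 2 := Nat.floor_le (by linarith)
  have hN2 : r / 2 < N + 1 := Nat.lt_floor_add_one _
  have hN3 : 1 ≤ N := by
    have : (0 : ℝ) < N := by linarith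
    exact_mod_cast this
  have hN3' : (1 : ℝ) ≤ N := by exact_mod_cast hN3
  have hg := hgap N z w hN3 hzU.1.1.1 hzU.1.2.1
  have hclose := hV w hw z hz
  rw [hf, Prod.norm_def] at hclose
  simp only [max_le_iff, Prod.fst_sub, Prod.snd_sub] at hclose
  have est : ∀ a b : InfinitePlace K ⊕ S → ℝ, ‖b‖ ≤ 2 * hz' → ‖hw'⁻¹ • a - hz'⁻¹ • b‖ ≤ 1 / (32 * n) →
      ‖a - ((2 * N + 1 : ℕ) : ℝ) • b‖ ≤ hw' * (1 / (32 * n)) + 2 * hz' := by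
    intro a b hb hab
    have e : a - ((2 * N + 1 : ℕ) : ℝ) • b = hw' • (hw'⁻¹ • a - hz'⁻¹ • b) + (r - (2 * N + 1)) • b := by
      rw [smul_sub, smul_smul, mul_inv_cancel₀ hw0.ne', one_smul, smul_smul, hr, div_eq_mul_inv, sub_smul]
      push_cast; abel
    rw [e]
    refine (norm_add_le _ _).trans ?_
    rw [norm_smul, norm_smul, Real.norm_eq_abs, Real.norm_eq_abs, abs_of_pos hw0]
    refine add_le_add (mul_le_mul_of_nonneg_left hab hw0.le) ?_
    have : |r - (2 * N + 1)| ≤ 1 := by rw [abs_le]; constructor <;> linarith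
    calc _ ≤ 1 * ‖b‖ := mul_le_mul_of_nonneg_right this (norm_nonneg _)
      _ ≤ _ := by rw [one_mul]; exact hb
  have hn0 : (Fintype.card (InfinitePlace K ⊕ S) : ℝ) ≤ n := by rw [hn]; linarith
  have b1 : logHeight₁ (w / z ^ (2 * N + 1)) ≤ n * (hw' * (1 / (32 * n)) + 2 * hz') := by
    refine (hwU.1.1.div_pow hzU.1.1 _).logHeight_le.trans ?_
    rw [logEmb_div_pow hwU.1.1.1 hzU.1.1.1]
    exact mul_le_mul hn0 (est _ _ (hbd z hzU).1 hclose.1) (norm_nonneg _) (by linarith)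
  have b2 : logHeight₁ ((1 - w) / (1 - z) ^ (2 * N + 1)) ≤ n * (hw' * (1 / (32 * n)) + 2 * hz') := by
    refine (hwU.1.2.div_pow hzU.1.2 _).logHeight_le.trans ?_
    rw [logEmb_div_pow hwU.1.2.1 hzU.1.2.1]
    exact mul_le_mul hn0 (est _ _ (hbd z hzU).2 hclose.2) (norm_nonneg _) (by linarith)
  have e3 : n * (hw' * (1 / (32 * n)) + 2 * hz') = hw' / 32 + 2 * n * hz' := by field_simp
  rw [e3] at b1 b2
  have q1 : hw' / 32 ≤ (N : ℝ) * hz' / 8 := by rw [hrw]; nlinarith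
  have q2 : 16 * n * hz' ≤ N * hz' := by
    apply mul_le_mul_of_nonneg_right _ hz0.le; linarith
  have q3 : 8 * (c * (N + 1)) ≤ 2 * (N * hz') := by
    have : 8 * c ≤ hz' := by linarith
    nlinarith [mul_le_mul_of_nonneg_left this (show (0:ℝ) ≤ N by linarith)]
  have q4 : 0 < (N : ℝ) * hz' := by positivity
  linarith

end sunits

/-! ### Square classes of number fields -/

section squareclasses
open NumberField IsDedekindDomain FractionalIdeal
open scoped nonZeroDivisors

variable {K : Type*} [Field K] [NumberField K]

lemma relIndex_ne_zero_of_finite_map {G F : Type*} [Group G] [Finite F] {H L : Subgroup G}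
    (f : L → F) (hf : ∀ x y : L, f x = f y → (x : G)⁻¹ * y ∈ H) : H.relIndex L ≠ 0 := by
  have : Finite (L ⧸ H.subgroupOf L) := by
    refine Finite.of_injective (fun q : L ⧸ H.subgroupOf L => f q.out) fun p q h => ?_
    rw [← p.out_eq', ← q.out_eq']
    exact Quotient.sound' (QuotientGroup.leftRel_apply.2 (Subgroup.mem_subgroupOf.2 (hf _ _ h)))
  exact Subgroup.index_ne_zero_of_finite

lemma spanSingleton_unit_ne_zero (x : Kˣ) : spanSingleton (𝓞 K)⁰ (x : K) ≠ 0 :=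
  spanSingleton_ne_zero_iff.2 x.ne_zero

/-- The exponent of the prime `v` in the factorisation of the principal ideal `(x)`. -/
noncomputable def primeOrd (v : HeightOneSpectrum (𝓞 K)) : Kˣ →* Multiplicative ℤ where
  toFun x := Multiplicative.ofAdd (count K v (spanSingleton (𝓞 K)⁰ (x : K)))
  map_one' := by simp [count_one]
  map_mul' x y := by
    rw [Units.val_mul, ← spanSingleton_mul_spanSingleton, count_mul K v (spanSingleton_unit_ne_zero x)
      (spanSingleton_unit_ne_zero y),
      ofAdd_add]

lemma primeOrd_eq_one {w : FinitePlace K} {x : Kˣ} (h : w x = 1) :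
    primeOrd w.maximalIdeal x = 1 := by
  set v := w.maximalIdeal
  have hval : v.valuation K (x : K) = 1 := by
    have h1 := w.norm_embedding_eq (x : K)
    rw [FinitePlace.norm_embedding, h] at h1
    have h2 : WithZeroMulInt.toNNReal (HeightOneSpectrum.absNorm_ne_zero v)
        (v.valuation K (x : K)) = 1 := NNReal.coe_injective h1
    exact (WithZeroMulInt.toNNReal_strictMono
      (HeightOneSpectrum.one_lt_absNorm_nnreal v)).injective (by rw [h2, map_one])
  obtain ⟨a, b, hb, hx⟩ := IsFractionRing.div_surjective (A := 𝓞 K) (x : K)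
  have hb0 : b ≠ 0 := nonZeroDivisors.ne_zero hb
  have ha0 : a ≠ 0 := by
    rintro rfl
    exact x.ne_zero (by rw [← hx]; simp)
  have hvb : v.valuation K (algebraMap (𝓞 K) K b) ≠ 0 := by
    rw [Valuation.ne_zero_iff]; simpa using hb0
  rw [← hx, map_div₀, div_eq_one_iff_eq hvb, HeightOneSpectrum.valuation_of_algebraMap,
    HeightOneSpectrum.valuation_of_algebraMap, HeightOneSpectrum.intValuation_if_neg _ ha0,
    HeightOneSpectrum.intValuation_if_neg _ hb0, WithZero.exp_inj] at hval
  change Multiplicative.ofAdd _ = _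
  rw [ofAdd_eq_one]
  classical
  rw [count_well_defined K v (spanSingleton_unit_ne_zero x) (a := b) (J := Ideal.span {a}) (by
    rw [coeIdeal_span_singleton, spanSingleton_mul_spanSingleton, ← hx]; congr 1; field_simp)]
  have := hval
  clear * - this
  have e : ∀ (p q : ℕ), -(p : ℤ) = -(q : ℤ) → (p : ℤ) - q = 0 := by omega
  convert e _ _ this

/-- The nonzero elements of `K` whose order at every prime outside `S` is even. -/
def evenOutside (S : Set (HeightOneSpectrum (𝓞 K))) : Subgroup Kˣ where
  carrier := {x | ∀ v ∉ S, Even (primeOrd v x).toAdd}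
  one_mem' v _ := by simp
  mul_mem' hx hy v hv := by rw [map_mul, toAdd_mul]; exact (hx v hv).add (hy v hv)
  inv_mem' hx v hv := by rw [map_inv, toAdd_inv]; exact (hx v hv).neg

/-- The squares in a commutative group. -/
def sqUnits (G : Type*) [CommGroup G] : Subgroup G := (powMonoidHom 2 : G →* G).range

lemma relIndex_evenOutside (S : Finset (HeightOneSpectrum (𝓞 K))) :
    (evenOutside (∅ : Set (HeightOneSpectrum (𝓞 K)))).relIndex
      (evenOutside (S : Set (HeightOneSpectrum (𝓞 K)))) ≠ 0 := by
  classical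
  refine relIndex_ne_zero_of_finite_map
    (fun x (v : S) => decide (Even (primeOrd v.1 (x : Kˣ)).toAdd)) fun x y h v _ => ?_
  rw [map_mul, map_inv, toAdd_mul, toAdd_inv]
  by_cases hv : v ∈ S
  · have := congrFun h ⟨v, hv⟩
    simp only [decide_eq_decide] at this
    rw [Int.even_add, even_neg]
    exact this
  · exact (x.2 v hv).neg.add (y.2 v hv)

lemma exists_sq_ideal {x : Kˣ} (hx : x ∈ evenOutside (∅ : Set (HeightOneSpectrum (𝓞 K)))) :
    ∃ J : (FractionalIdeal (𝓞 K)⁰ K)ˣ, J ^ 2 = toPrincipalIdeal (𝓞 K) K x := by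
  have hI : spanSingleton (𝓞 K)⁰ (x : K) ≠ 0 := spanSingleton_unit_ne_zero x
  choose e he using fun v => (hx v (Set.notMem_empty v)).two_dvd
  have hfin : (Function.mulSupport fun v : HeightOneSpectrum (𝓞 K) =>
      (v.asIdeal : FractionalIdeal (𝓞 K)⁰ K) ^ e v).Finite := by
    refine (Filter.eventually_cofinite.1
      (finite_factors (spanSingleton (𝓞 K)⁰ (x : K)))).subset fun v hv h => hv ?_
    have h' : (primeOrd v x).toAdd = 0 := h
    rw [he v] at h'
    have : e v = 0 := by omega
    simp [this]
  set J := ∏ᶠ v : HeightOneSpectrum (𝓞 K), (v.asIdeal : FractionalIdeal (𝓞 K)⁰ K) ^ e v with hJ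
  have hJ2 : J ^ 2 = spanSingleton (𝓞 K)⁰ (x : K) := by
    rw [hJ, finprod_pow hfin, ← finprod_heightOneSpectrum_factorization' K hI]
    refine finprod_congr fun v => ?_
    rw [← zpow_natCast, ← zpow_mul]
    congr 1
    have := he v
    change count K v _ = _ at this
    rw [this, mul_comm]; rfl
  have hJ0 : J ≠ 0 := by
    rintro h
    rw [h] at hJ2
    exact hI (by rw [← hJ2]; simp)
  refine ⟨Units.mk0 J hJ0, Units.ext ?_⟩
  simpa using hJ2

/-- The products of a unit of the ring of integers and a nonzero square. -/
noncomputable def unitsSq (K : Type*) [Field K] [NumberField K] : Subgroup Kˣ :=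
  (Units.map (algebraMap (𝓞 K) K : 𝓞 K →* K)).range ⊔ sqUnits Kˣ

lemma toPrincipalIdeal_eq_one {x : Kˣ} (h : toPrincipalIdeal (𝓞 K) K x = 1) :
    x ∈ (Units.map (algebraMap (𝓞 K) K : 𝓞 K →* K)).range := by
  have key : ∀ y : Kˣ, toPrincipalIdeal (𝓞 K) K y = 1 → ∃ a : 𝓞 K, algebraMap (𝓞 K) K a = y := by
    intro y hy
    have h1 := congrArg Units.val hy
    rw [coe_toPrincipalIdeal] at h1
    have h2 : (y : K) ∈ (1 : FractionalIdeal (𝓞 K)⁰ K) := by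
      rw [← Units.val_one, ← h1]; exact mem_spanSingleton_self _ _
    exact (mem_one_iff _).1 h2
  obtain ⟨a, ha⟩ := key x h
  obtain ⟨b, hb⟩ := key x⁻¹ (by rw [map_inv, h, inv_one])
  have hab : a * b = 1 := by
    apply FaithfulSMul.algebraMap_injective (𝓞 K) K
    rw [map_mul, ha, hb, map_one]; simp
  exact ⟨⟨a, b, hab, by rw [mul_comm, hab]⟩, Units.ext (by simpa using ha)⟩

/-- Finiteness of the class group: the ideal square root of `x` has finitely many possible classes,
and two elements with the same class differ by a unit and a square. -/
lemma relIndex_unitsSq :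
    (unitsSq K).relIndex (evenOutside (∅ : Set (HeightOneSpectrum (𝓞 K)))) ≠ 0 := by
  classical
  have : Finite (ClassGroup (𝓞 K)) := Finite.of_fintype _
  choose J hJ using fun x : evenOutside (∅ : Set (HeightOneSpectrum (𝓞 K))) => exists_sq_ideal x.2
  refine relIndex_ne_zero_of_finite_map (fun x => ClassGroup.mk K (J x)) fun x y h => ?_
  have h1 : ClassGroup.mk K ((J x)⁻¹ * J y) = 1 := by
    rw [map_mul, map_inv]; exact inv_mul_eq_one.2 h
  rw [ClassGroup.mk_eq_one_iff, isPrincipal_iff] at h1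
  obtain ⟨z, hz⟩ := mem_principal_ideals_iff.2 ⟨_, h1.choose_spec.symm⟩
  have h2 : toPrincipalIdeal (𝓞 K) K ((x : Kˣ)⁻¹ * y * (z ^ 2)⁻¹) = 1 := by
    rw [map_mul, map_mul, map_inv, map_inv, map_pow, hz, ← hJ x, ← hJ y, mul_pow, inv_pow,
      mul_inv_cancel]
  rw [unitsSq, Subgroup.mem_sup]
  exact ⟨_, toPrincipalIdeal_eq_one h2, z ^ 2, ⟨z, rfl⟩, by rw [inv_mul_cancel_right]⟩

/-- Units modulo squares form a finite group, since the unit group is finitely generated. -/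
lemma relIndex_sqUnits : (sqUnits Kˣ).relIndex (unitsSq K) ≠ 0 := by
  have : Finite ((𝓞 K)ˣ ⧸ sqUnits (𝓞 K)ˣ) := by
    have : Group.FG (𝓞 K)ˣ := Group.fg_iff_monoid_fg.2 inferInstance
    exact Subgroup.finiteIndex_iff_finite_quotient.1
      (Subgroup.finiteIndex_range_powMonoidHom_of_fg (𝓞 K)ˣ two_ne_zero)
  have hx : ∀ x : unitsSq K, ∃ u : (𝓞 K)ˣ, ∃ t : Kˣ,
      (x : Kˣ) = Units.map (algebraMap (𝓞 K) K : 𝓞 K →* K) u * t ^ 2 := by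
    rintro ⟨x, hx⟩
    rw [unitsSq, Subgroup.mem_sup] at hx
    obtain ⟨_, ⟨u, rfl⟩, _, ⟨t, rfl⟩, rfl⟩ := hx
    exact ⟨u, t, rfl⟩
  choose u t hut using hx
  refine relIndex_ne_zero_of_finite_map
    (fun x => (u x : (𝓞 K)ˣ ⧸ sqUnits (𝓞 K)ˣ)) fun x y h => ?_
  obtain ⟨w, hw⟩ := QuotientGroup.eq.1 h
  refine ⟨Units.map (algebraMap (𝓞 K) K : 𝓞 K →* K) w * ((t x)⁻¹ * t y), ?_⟩
  have hw' : w ^ 2 = (u x)⁻¹ * u y := hw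
  rw [powMonoidHom_apply, mul_pow, ← map_pow, hw', hut x, hut y, map_mul, map_inv, mul_pow, inv_pow,
    mul_inv]
  exact mul_mul_mul_comm _ _ _ _

/-- The `S`-Selmer group of `K` for squares is finite: elements of even order at all primes
outside `S` lie in finitely many square classes. -/
theorem square_classes (S : Finset (FinitePlace K)) : ∃ D : Finset K, (∀ d ∈ D, d ≠ 0) ∧
    ∀ x : K, x ≠ 0 → (∀ v : FinitePlace K, v ∉ S → ∃ t : K, v x = v t ^ 2) →
      ∃ d ∈ D, ∃ y : K, x = d * y ^ 2 := by
  classical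
  set E := evenOutside (S.image FinitePlace.maximalIdeal : Set (HeightOneSpectrum (𝓞 K))) with hE
  have hfin : (sqUnits Kˣ).relIndex E ≠ 0 := by
    refine Subgroup.relIndex_ne_zero_trans
      (Subgroup.relIndex_ne_zero_trans relIndex_sqUnits relIndex_unitsSq) ?_
    exact relIndex_evenOutside _
  have : Finite (E ⧸ (sqUnits Kˣ).subgroupOf E) := Nat.finite_of_card_ne_zero hfin
  have := Fintype.ofFinite (E ⧸ (sqUnits Kˣ).subgroupOf E)
  refine ⟨Finset.univ.image fun q : E ⧸ (sqUnits Kˣ).subgroupOf E => ((q.out : Kˣ) : K),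
    by simp, fun x hx h => ?_⟩
  have hxE : Units.mk0 x hx ∈ E := by
    intro v hv
    have hv' : FinitePlace.mk v ∉ S := fun hS =>
      hv (Finset.mem_coe.2 (Finset.mem_image.2 ⟨_, hS, FinitePlace.maximalIdeal_mk v⟩))
    obtain ⟨t, ht⟩ := h _ hv'
    have ht0 : t ≠ 0 := by
      rintro rfl
      rw [map_zero, zero_pow two_ne_zero, map_eq_zero] at ht
      exact hx ht
    have h1 : FinitePlace.mk v ((Units.mk0 x hx * ((Units.mk0 t ht0) ^ 2)⁻¹ : Kˣ) : K) = 1 := by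
      have : FinitePlace.mk v t ≠ 0 := by rwa [Ne, map_eq_zero]
      simp only [Units.val_mul, Units.val_mk0, Units.val_inv_eq_inv_val, Units.val_pow_eq_pow_val,
        map_mul, map_inv₀, map_pow, ht]
      exact mul_inv_cancel₀ (pow_ne_zero 2 this)
    have h2 := primeOrd_eq_one h1
    rw [FinitePlace.maximalIdeal_mk, map_mul, map_inv, mul_inv_eq_one, map_pow] at h2
    rw [h2, toAdd_pow]
    exact ⟨_, two_nsmul _⟩
  refine ⟨_, Finset.mem_image_of_mem _ (Finset.mem_univ
    (QuotientGroup.mk ⟨Units.mk0 x hx, hxE⟩ : E ⧸ (sqUnits Kˣ).subgroupOf E)), ?_⟩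
  obtain ⟨⟨y, ⟨t, ht⟩⟩, hy⟩ :=
    QuotientGroup.mk_out_eq_mul ((sqUnits Kˣ).subgroupOf E) ⟨Units.mk0 x hx, hxE⟩
  refine ⟨(t⁻¹ : Kˣ), ?_⟩
  have h3 : ((y : Kˣ) : K) = (t : K) ^ 2 := (congrArg Units.val ht).symm
  rw [hy]
  simp only [Subgroup.coe_mul, Units.val_mul, Units.val_mk0, h3, Units.val_inv_eq_inv_val]
  field_simp

end squareclasses

/-! ### Integral points on hyperelliptic curves -/

section hyperelliptic
open NumberField

universe u

variable {K : Type u} [Field K] [NumberField K] {R : Type*} [CommRing R]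

/-- A finitely generated ring is mapped into the `S`-integers for some finite set `S`. -/
lemma exists_integral_outside [Algebra.FiniteType ℤ R] (ρ : R →+* K) :
    ∃ S : Finset (FinitePlace K), ∀ v ∉ S, ∀ x : R, v (ρ x) ≤ 1 := by
  classical
  obtain ⟨G, hG⟩ := (‹Algebra.FiniteType ℤ R›).out
  have hfin : ∀ g : R, {v : FinitePlace K | ¬ v (ρ g) ≤ 1}.Finite := by
    intro g
    by_cases h0 : ρ g = 0
    · simp [h0]
    · exact (FinitePlace.hasFiniteMulSupport h0).subset fun v hv h => hv h.le
  refine ⟨G.biUnion fun g => (hfin g).toFinset, fun v hv x => ?_⟩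
  simp only [Finset.mem_biUnion, not_exists, not_and, Set.Finite.mem_toFinset, Set.mem_ofPred_eq,
    not_not] at hv
  have hx : x ∈ Algebra.adjoin ℤ (G : Set R) := by rw [hG]; trivial
  induction hx using Algebra.adjoin_induction with
  | mem x hx => exact hv x hx
  | algebraMap n =>
    have h := FinitePlace.norm_le_one K v.maximalIdeal (n : 𝓞 K)
    rw [FinitePlace.norm_embedding_eq] at h
    simpa using h
  | add x y _ _ hx hy =>
    rw [map_add]
    exact (FinitePlace.add_le v _ _).trans (max_le hx hy)
  | mul x y _ _ hx hy =>
    rw [map_mul, map_mul]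
    exact mul_le_one₀ hx (by positivity) hy

lemma place_unit_eq_one {ρ : R →+* K} {v : FinitePlace K} (hv : ∀ x : R, v (ρ x) ≤ 1) {x : R}
    (hx : IsUnit x) : v (ρ x) = 1 := by
  obtain ⟨y, hxy⟩ := hx.exists_right_inv
  have h : v (ρ x) * v (ρ y) = 1 := by rw [← map_mul, ← map_mul, hxy, map_one, map_one]
  refine le_antisymm (hv x) ?_
  rw [← h]
  exact mul_le_of_le_one_right (by positivity) (hv y)

lemma place_eq_one_of_mul {v : FinitePlace K} {x y : K} (hx : v x ≤ 1) (hy : v y ≤ 1)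
    (h : v (x * y) = 1) : v x = 1 := by
  rw [map_mul] at h
  refine le_antisymm hx ?_
  rw [← h]
  exact mul_le_of_le_one_right (by positivity) hy

lemma place_sub_le (v : FinitePlace K) {x y : K} (hx : v x ≤ 1) (hy : v y ≤ 1) :
    v (x - y) ≤ 1 := by
  rw [sub_eq_add_neg]
  refine (FinitePlace.add_le v _ _).trans (max_le hx ?_)
  rwa [map_neg_eq_map]

/-- Siegel's identity: if `y - r₁`, `y - r₂`, `y - r₃` are all squares, the differences of their
square roots are `S`-units, and the unit equation leaves finitely many possibilities for `y`. -/
lemma finite_three_squares [Algebra.FiniteType ℤ R] (ρ : R →+* K) {r₁ r₂ r₃ : R}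
    (h12 : IsUnit (r₁ - r₂)) (h13 : IsUnit (r₁ - r₃)) (h23 : IsUnit (r₂ - r₃)) :
    {y : K | (∃ x : R, ρ x = y) ∧ ∃ s₁ s₂ s₃ : K, s₁ ^ 2 = y - ρ r₁ ∧ s₂ ^ 2 = y - ρ r₂ ∧
      s₃ ^ 2 = y - ρ r₃}.Finite := by
  classical
  obtain ⟨S, hS⟩ := exists_integral_outside ρ
  have hU := sunit_finite S
  set U := {u : K | IsSUnit S u ∧ IsSUnit S (1 - u)} with hUdef
  set F : Set K := (fun p : K × K => ρ (r₂ - r₁) / (p.1 * p.2)) '' (U ×ˢ U) with hF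
  have hFfin : F.Finite := (hU.prod hU).image _
  have key : ∀ x : R, ∀ s₁ s₂ s₃ : K, s₁ ^ 2 = ρ x - ρ r₁ → s₂ ^ 2 = ρ x - ρ r₂ →
      s₃ ^ 2 = ρ x - ρ r₃ → (s₁ - s₃) ^ 2 ∈ F := by
    intro x s₁ s₂ s₃ e1 e2 e3
    have hunit : ∀ (p q : R) (s t : K), IsUnit (p - q) → s ^ 2 = ρ x - ρ p → t ^ 2 = ρ x - ρ q →
        IsSUnit S (s - t) := by
      intro p q s t hpq es et
      have hprod : (s - t) * (s + t) = ρ (-(p - q)) := by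
        rw [map_neg, map_sub]; linear_combination es - et
      have hne : ρ (-(p - q)) ≠ 0 := (hpq.neg.map ρ).ne_zero
      refine ⟨fun h => hne (by rw [← hprod, h, zero_mul]), fun v hv => ?_⟩
      have hle : ∀ (s : K) (p : R), s ^ 2 = ρ x - ρ p → v s ≤ 1 := by
        intro s p es
        have : v s ^ 2 ≤ 1 := by rw [← map_pow, es, ← map_sub]; exact hS v hv _
        exact (sq_le_one_iff₀ (by positivity)).1 this
      have ht' : v (-t) ≤ 1 := by rw [map_neg_eq_map]; exact hle t q et
      refine place_eq_one_of_mul (y := s + t) (place_sub_le v (hle s p es) (hle t q et)) ?_ ?_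
      · rw [← sub_neg_eq_add]; exact place_sub_le v (hle s p es) ht'
      · rw [hprod]; exact place_unit_eq_one (hS v hv) hpq.neg
    have ha := hunit _ _ s₁ s₂ h12 e1 e2
    have hb := hunit _ _ s₂ s₃ h23 e2 e3
    have hc := hunit _ _ s₁ s₃ h13 e1 e3
    have ha' := hunit _ _ s₁ (-s₂) h12 e1 (by rw [neg_sq, e2])
    have hb' := hunit _ _ (-s₂) s₃ h23 (by rw [neg_sq, e2]) e3
    have hc0 : s₁ - s₃ ≠ 0 := hc.1
    have hdiv : ∀ {p q : K}, IsSUnit S p → IsSUnit S q → IsSUnit S (p / q) := by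
      intro p q hp hq
      refine ⟨div_ne_zero hp.1 hq.1, fun v hv => ?_⟩
      rw [map_div₀, hp.2 v hv, hq.2 v hv, div_one]
    have hu : (s₁ - s₂) / (s₁ - s₃) ∈ U := by
      refine ⟨hdiv ha hc, ?_⟩
      rw [show 1 - (s₁ - s₂) / (s₁ - s₃) = (s₂ - s₃) / (s₁ - s₃) by field_simp; ring]
      exact hdiv hb hc
    have hu' : (s₁ - -s₂) / (s₁ - s₃) ∈ U := by
      refine ⟨hdiv ha' hc, ?_⟩
      rw [show 1 - (s₁ - -s₂) / (s₁ - s₃) = (-s₂ - s₃) / (s₁ - s₃) by field_simp; ring]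
      exact hdiv hb' hc
    refine ⟨(_, _), ⟨hu, hu'⟩, ?_⟩
    have := ha.1
    have := ha'.1
    have e : ρ (r₂ - r₁) = (s₁ - s₂) * (s₁ - -s₂) := by
      rw [map_sub]; linear_combination e2 - e1
    change ρ (r₂ - r₁) / _ = _
    rw [e]
    field_simp
  refine ((hFfin.prod hFfin).image
    fun p : K × K => ρ r₁ + (p.1 + p.2 + 2 * (ρ r₃ - ρ r₁)) / 4).subset ?_
  rintro _ ⟨⟨x, rfl⟩, s₁, s₂, s₃, e1, e2, e3⟩
  refine ⟨(_, _), ⟨key x s₁ s₂ s₃ e1 e2 e3, key x s₁ s₂ (-s₃) e1 e2 (by rw [neg_sq, e3])⟩, ?_⟩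
  simp only
  linear_combination e1 / 2 + e3 / 2

/-- A number field in which three given elements become squares. -/
lemma exists_sqrt_ext (δ₁ δ₂ δ₃ : K) : ∃ (L : Type u) (_ : Field L) (_ : NumberField L)
    (i : K →+* L) (e₁ e₂ e₃ : L), e₁ ^ 2 = i δ₁ ∧ e₂ ^ 2 = i δ₂ ∧ e₃ ^ 2 = i δ₃ := by
  have hroot : ∀ δ : K, ∃ e : AlgebraicClosure K, e ^ 2 = algebraMap K _ δ := fun δ =>
    IsAlgClosed.exists_pow_nat_eq _ two_pos
  obtain ⟨e₁, h₁⟩ := hroot δ₁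
  obtain ⟨e₂, h₂⟩ := hroot δ₂
  obtain ⟨e₃, h₃⟩ := hroot δ₃
  let L := IntermediateField.adjoin K {e₁, e₂, e₃}
  have hL : FiniteDimensional K L := IntermediateField.finiteDimensional_adjoin
    fun x _ => Algebra.IsIntegral.isIntegral x
  refine ⟨L, inferInstance, NumberField.of_module_finite K L, algebraMap K L,
    ⟨e₁, IntermediateField.subset_adjoin _ _ (by simp)⟩,
    ⟨e₂, IntermediateField.subset_adjoin _ _ (by simp)⟩,
    ⟨e₃, IntermediateField.subset_adjoin _ _ (by simp)⟩, ?_, ?_, ?_⟩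
  · exact Subtype.ext h₁
  · exact Subtype.ext h₂
  · exact Subtype.ext h₃

/-- Integral points on hyperelliptic curves: three distinct roots of odd multiplicity leave only
finitely many integral points. -/
theorem hyperelliptic_finite [Algebra.FiniteType ℤ R] (ρ : R →+* K) {r₁ r₂ r₃ : R}
    (h12 : IsUnit (r₁ - r₂)) (h13 : IsUnit (r₁ - r₃)) (h23 : IsUnit (r₂ - r₃))
    {m₁ m₂ m₃ : ℕ} (hm₁ : Odd m₁) (hm₂ : Odd m₂) (hm₃ : Odd m₃) {q₁ q₂ q₃ : R[X]}
    (hq₁ : IsUnit (q₁.eval r₁)) (hq₂ : IsUnit (q₂.eval r₂)) (hq₃ : IsUnit (q₃.eval r₃)) :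
    {y : K | ∃ x s : R, ρ x = y ∧ s ^ 2 = (x - r₁) ^ m₁ * q₁.eval x ∧
      s ^ 2 = (x - r₂) ^ m₂ * q₂.eval x ∧ s ^ 2 = (x - r₃) ^ m₃ * q₃.eval x}.Finite := by
  classical
  obtain ⟨S, hS⟩ := exists_integral_outside ρ
  obtain ⟨D, hD0, hD⟩ := square_classes S
  have hclass : ∀ (x s r : R) (m : ℕ) (q : R[X]), Odd m → IsUnit (q.eval r) →
      s ^ 2 = (x - r) ^ m * q.eval x → ρ x ≠ ρ r → ∃ d ∈ D, ∃ y : K, ρ x - ρ r = d * y ^ 2 := by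
    intro x s r m q hm hq hs hne
    have hne' : ρ x - ρ r ≠ 0 := sub_ne_zero.2 hne
    refine hD _ hne' fun v hv => ?_
    by_cases h1 : v (ρ x - ρ r) = 1
    · exact ⟨1, by simpa using h1⟩
    have hlt : v (ρ x - ρ r) < 1 := by
      refine lt_of_le_of_ne ?_ h1
      rw [← map_sub]; exact hS v hv _
    obtain ⟨w, hw⟩ := sub_dvd_eval_sub x r q
    have hqx : v (ρ (q.eval x)) = 1 := by
      refine le_antisymm (hS v hv _) ?_
      by_contra hlt'
      have hq1 := place_unit_eq_one (hS v hv) hq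
      have : ρ (q.eval r) = ρ (q.eval x) + -((ρ x - ρ r) * ρ w) := by
        rw [← map_sub, ← map_mul, ← hw, map_sub]; ring
      rw [this] at hq1
      refine absurd hq1 (ne_of_lt ((FinitePlace.add_le v _ _).trans_lt (max_lt ?_ ?_)))
      · exact not_le.1 hlt'
      · rw [map_neg_eq_map, map_mul]
        exact mul_lt_one_of_nonneg_of_lt_one_left (by positivity) hlt (hS v hv _)
    obtain ⟨k, rfl⟩ := hm
    have hv0 : v (ρ x - ρ r) ≠ 0 := by rwa [Ne, map_eq_zero]
    refine ⟨ρ s / (ρ x - ρ r) ^ k, ?_⟩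
    have h2 : v (ρ s) ^ 2 = v (ρ x - ρ r) ^ (2 * k + 1) := by
      rw [← map_pow, ← map_pow, hs, map_mul, map_mul, hqx, mul_one, map_pow, map_sub, map_pow]
    rw [map_div₀, map_pow, div_pow, h2, ← pow_mul, mul_comm k 2, pow_succ,
      mul_div_cancel_left₀ _ (pow_ne_zero _ hv0)]
  have hδ : ∀ δ₁ δ₂ δ₃ : K, {y : K | (∃ x : R, ρ x = y) ∧ ∃ s₁ s₂ s₃ : K,
      y - ρ r₁ = δ₁ * s₁ ^ 2 ∧ y - ρ r₂ = δ₂ * s₂ ^ 2 ∧ y - ρ r₃ = δ₃ * s₃ ^ 2}.Finite := by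
    intro δ₁ δ₂ δ₃
    obtain ⟨L, _, _, i, e₁, e₂, e₃, he₁, he₂, he₃⟩ := exists_sqrt_ext δ₁ δ₂ δ₃
    have hfin := finite_three_squares (i.comp ρ) h12 h13 h23
    refine Set.Finite.of_finite_image (f := i) (hfin.subset ?_)
      i.injective.injOn
    rintro _ ⟨_, ⟨⟨x, rfl⟩, s₁, s₂, s₃, h1, h2, h3⟩, rfl⟩
    refine ⟨⟨x, rfl⟩, e₁ * i s₁, e₂ * i s₂, e₃ * i s₃,
      ?_, ?_, ?_⟩
    · rw [RingHom.comp_apply, ← map_sub, h1, mul_pow, he₁, map_mul, map_pow]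
    · rw [RingHom.comp_apply, ← map_sub, h2, mul_pow, he₂, map_mul, map_pow]
    · rw [RingHom.comp_apply, ← map_sub, h3, mul_pow, he₃, map_mul, map_pow]
  refine (((D ×ˢ D ×ˢ D).finite_toSet.biUnion fun δ _ => hδ δ.1 δ.2.1 δ.2.2).union
    ({ρ r₁, ρ r₂, ρ r₃} : Set K).toFinite).subset ?_
  rintro _ ⟨x, s, rfl, h1, h2, h3⟩
  by_cases hx : ρ x = ρ r₁ ∨ ρ x = ρ r₂ ∨ ρ x = ρ r₃
  · exact Or.inr (by simpa using hx)
  push Not at hx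
  obtain ⟨d₁, hd₁, s₁, e₁⟩ := hclass x s r₁ m₁ q₁ hm₁ hq₁ h1 hx.1
  obtain ⟨d₂, hd₂, s₂, e₂⟩ := hclass x s r₂ m₂ q₂ hm₂ hq₂ h2 hx.2.1
  obtain ⟨d₃, hd₃, s₃, e₃⟩ := hclass x s r₃ m₃ q₃ hm₃ hq₃ h3 hx.2.2
  refine Or.inl (Set.mem_biUnion (x := (d₁, d₂, d₃)) ?_ ⟨⟨x, rfl⟩, s₁, s₂, s₃, e₁, e₂, e₃⟩)
  simp [hd₁, hd₂, hd₃]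

end hyperelliptic

/-! ### Specialisation to number fields -/

section specialization

/-- A number divisible by every `n` with `φ(n) ≤ D`. -/
lemma dvd_of_totient_le {n D : ℕ} (hn : 0 < n) (h : n.totient ≤ D) :
    n ∣ (D + 1).factorial ^ (D + 1) := by
  refine (Nat.dvd_iff_prime_pow_dvd_dvd _ _).2 fun p k hp hpk => ?_
  rcases Nat.eq_zero_or_pos k with rfl | hk
  · simp
  have h1 : p ^ (k - 1) * (p - 1) ≤ D := by
    rw [← Nat.totient_prime_pow hp hk]
    exact (Nat.le_of_dvd (Nat.totient_pos.2 hn) (Nat.totient_dvd_of_dvd hpk)).trans h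
  have hp2 := hp.two_le
  have hp1 : p - 1 ≤ D := le_trans (Nat.le_mul_of_pos_left _ (by positivity)) h1
  have hk1 : k - 1 < D := calc
    k - 1 < 2 ^ (k - 1) := Nat.lt_two_pow_self
    _ ≤ p ^ (k - 1) := Nat.pow_le_pow_left hp2 _
    _ ≤ p ^ (k - 1) * (p - 1) := Nat.le_mul_of_pos_right _ (by omega)
    _ ≤ D := h1
  exact (pow_dvd_pow p (by omega : k ≤ D + 1)).trans
    (pow_dvd_pow_of_dvd (Nat.dvd_factorial hp.pos (by omega)) _)

/-- Specialisation of a finitely generated `ℚ`-domain at an algebraic point, keeping an element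
of infinite order of infinite order. By Noether normalisation the points of the domain above
rational points have degree bounded by some `D`, and roots of unity of degree at most `D` have
bounded order. -/
lemma exists_specialization_rat {B : Type} [CommRing B] [IsDomain B] [Algebra ℚ B]
    [Algebra.FiniteType ℚ B] (a : B) (ha : ∀ n : ℕ, 0 < n → a ^ n ≠ 1) :
    ∃ (K : Type) (_ : Field K) (_ : NumberField K) (ρ : B →+* K),
      ∀ n : ℕ, 0 < n → ρ a ^ n ≠ 1 := by
  obtain ⟨s, g, hginj, hgint⟩ := exists_integral_inj_algHom_of_fg ℚ B
  let A := MvPolynomial (Fin s) ℚ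
  let _ : Algebra A B := g.toRingHom.toAlgebra
  have hInt : Algebra.IsIntegral A B := ⟨hgint⟩
  have hinj : Function.Injective (algebraMap A B) := hginj
  obtain ⟨p, hpm, hpa⟩ := hInt.isIntegral a
  set D := p.natDegree with hD
  set N := (D + 1).factorial ^ (D + 1) with hN
  have hNpos : 0 < N := pow_pos (Nat.factorial_pos _) _
  have hb : a ^ N - 1 ≠ 0 := sub_ne_zero.2 (ha N hNpos)
  have : FaithfulSMul A B := (faithfulSMul_iff_algebraMap_injective A B).2 hinj
  obtain ⟨c, hc0, w, hw⟩ := (hInt.isIntegral (a ^ N - 1)).isAlgebraic.exists_nonzero_dvd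
    (mem_nonZeroDivisors_of_ne_zero hb)
  obtain ⟨t, ht⟩ : ∃ t : Fin s → ℚ, MvPolynomial.eval t c ≠ 0 := by
    by_contra! h
    exact hc0 (MvPolynomial.funext fun x => by rw [h x, map_zero])
  let I : Ideal A := RingHom.ker (MvPolynomial.eval t)
  have hIsurj : Function.Surjective (MvPolynomial.eval t : A →+* ℚ) := fun q =>
    ⟨MvPolynomial.C q, MvPolynomial.eval_C q⟩
  have : I.IsMaximal := RingHom.ker_isMaximal_of_surjective _ hIsurj
  obtain ⟨Q, hQ, hQI⟩ := Ideal.exists_ideal_over_maximal_of_isIntegral (S := B) I (by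
    rw [(RingHom.injective_iff_ker_eq_bot _).1 hinj]; exact bot_le)
  let _ : Field (B ⧸ Q) := Ideal.Quotient.field Q
  have hfin : Module.Finite ℚ (B ⧸ Q) := finite_of_finite_type_of_isJacobsonRing ℚ (B ⧸ Q)
  have hK : NumberField (B ⧸ Q) :=
    { to_charZero := algebraRat.charZero _
      to_finiteDimensional := by convert hfin; exact Subsingleton.elim _ _ }
  refine ⟨B ⧸ Q, inferInstance, hK, Ideal.Quotient.mk Q, fun n hn h1 => ?_⟩
  set α := Ideal.Quotient.mk Q a with hα
  have hcomp : ∀ q : A, Ideal.Quotient.mk Q (algebraMap A B q) =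
      algebraMap ℚ (B ⧸ Q) (MvPolynomial.eval t q) := by
    intro q
    have hmem : q - MvPolynomial.C (MvPolynomial.eval t q) ∈ I := by
      rw [RingHom.mem_ker, map_sub]
      exact sub_eq_zero.2 (MvPolynomial.eval_C _).symm
    rw [← hQI, Ideal.mem_comap, map_sub] at hmem
    have := Ideal.Quotient.eq.2 hmem
    rw [this]
    have : algebraMap A B (MvPolynomial.C (MvPolynomial.eval t q)) =
      algebraMap ℚ B (MvPolynomial.eval t q) := g.commutes _
    rw [this]
    exact RingHom.congr_fun (Subsingleton.elim ((Ideal.Quotient.mk Q).comp (algebraMap ℚ B))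
      (algebraMap ℚ (B ⧸ Q))) _
  have hroot : aeval α (p.map (MvPolynomial.eval t)) = 0 := by
    rw [aeval_def, eval₂_map, ← RingHom.ext hcomp (f := (Ideal.Quotient.mk Q).comp (algebraMap A B))
      (g := (algebraMap ℚ (B ⧸ Q)).comp (MvPolynomial.eval t)), ← hom_eval₂, hpa, map_zero]
  have hfo : IsOfFinOrder α := isOfFinOrder_iff_pow_eq_one.2 ⟨n, hn, h1⟩
  have hd := hfo.orderOf_pos
  have hdeg : (orderOf α).totient ≤ D := by
    rw [← natDegree_cyclotomic (orderOf α) ℚ,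
      cyclotomic_eq_minpoly_rat (IsPrimitiveRoot.orderOf α) hd, hD,
      ← hpm.natDegree_map (MvPolynomial.eval t)]
    exact natDegree_le_of_dvd (minpoly.dvd ℚ α hroot) (hpm.map _).ne_zero
  have hαN : α ^ N = 1 := orderOf_dvd_iff_pow_eq_one.1 (dvd_of_totient_le hd hdeg)
  have hz : Ideal.Quotient.mk Q (algebraMap A B c) = 0 := by
    rw [hw, map_mul, map_sub, map_pow, ← hα, hαN, map_one, sub_self, zero_mul]
  rw [hcomp, map_eq_zero] at hz
  exact ht hz

/-- A finitely generated subring of `ℂ` embeds into a finitely generated `ℚ`-domain. -/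
lemma exists_adjoin_rat (G : Finset ℂ) : ∃ (B : Type) (_ : CommRing B) (_ : IsDomain B)
    (_ : Algebra ℚ B) (_ : Algebra.FiniteType ℚ B) (i : Algebra.adjoin ℤ (G : Set ℂ) →+* B),
      Function.Injective i := by
  have hle : ∀ x ∈ Algebra.adjoin ℤ (G : Set ℂ), x ∈ Algebra.adjoin ℚ (G : Set ℂ) := by
    intro x hx
    induction hx using Algebra.adjoin_induction with
    | mem x hx => exact Algebra.subset_adjoin hx
    | algebraMap n => exact intCast_mem (Algebra.adjoin ℚ (G : Set ℂ)) n
    | add x y _ _ hx hy => exact add_mem hx hy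
    | mul x y _ _ hx hy => exact mul_mem hx hy
  exact ⟨Algebra.adjoin ℚ (G : Set ℂ), inferInstance, inferInstance, inferInstance,
    (Subalgebra.fg_iff_finiteType _).1 ⟨G, rfl⟩,
    { toFun := fun x => ⟨x.1, hle x.1 x.2⟩
      map_one' := rfl
      map_zero' := rfl
      map_add' := fun _ _ => rfl
      map_mul' := fun _ _ => rfl },
    fun x y h => Subtype.ext (Subtype.mk.inj h)⟩

/-- A finitely generated subring of `ℂ` has a homomorphism to a number field under which a given
element of infinite order keeps infinite order. -/
theorem exists_specialization (G : Finset ℂ) (a : Algebra.adjoin ℤ (G : Set ℂ))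
    (ha : ∀ n : ℕ, 0 < n → a ^ n ≠ 1) :
    ∃ (K : Type) (_ : Field K) (_ : NumberField K) (ρ : Algebra.adjoin ℤ (G : Set ℂ) →+* K),
      ∀ n : ℕ, 0 < n → ρ a ^ n ≠ 1 := by
  obtain ⟨B, _, _, _, _, i, hi⟩ := exists_adjoin_rat G
  obtain ⟨K, _, _, ρ, hρ⟩ := exists_specialization_rat (i a) fun n hn h =>
    ha n hn (hi (by rw [map_pow, h, map_one]))
  exact ⟨K, inferInstance, inferInstance, ρ.comp i, hρ⟩

end specialization

/-! ### Iterates and finitely generated rings -/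

section iterates

lemma polyIter_one (A : ℂ[X]) : polyIter A 1 = A := by
  simp [polyIter]

lemma polyIter_add (A : ℂ[X]) (j k : ℕ) :
    polyIter A (j + k) = (polyIter A j).comp (polyIter A k) := by
  induction j with
  | zero => simp [polyIter]
  | succ j ih => rw [Nat.succ_add, polyIter, ih, polyIter, comp_assoc]

lemma polyIter_succ' (A : ℂ[X]) (k : ℕ) : polyIter A (k + 1) = (polyIter A k).comp A := by
  rw [polyIter_add, polyIter_one]

lemma natDegree_polyIter (A : ℂ[X]) (k : ℕ) : (polyIter A k).natDegree = A.natDegree ^ k := by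
  induction k with
  | zero => simp [polyIter]
  | succ k ih => rw [polyIter, natDegree_comp, ih, pow_succ']

lemma eval_polyIter (A : ℂ[X]) (k : ℕ) (z : ℂ) :
    (polyIter A k).eval z = (fun w => A.eval w)^[k] z := by
  induction k with
  | zero => simp [polyIter]
  | succ k ih => rw [polyIter, eval_comp, ih, Function.iterate_succ_apply']

/-- An infinite set whose elements are all values of both `f` and `g` consists, up to finitely
many elements, of values of `f` and `g` at large arguments. -/
lemma infinite_large_indices {f g : ℕ → ℂ} {V : Set ℂ} (hV : V.Infinite)
    (h : ∀ x ∈ V, (∃ i, f i = x) ∧ ∃ j, g j = x) (N : ℕ) :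
    {x ∈ V | ∃ i j, N < i ∧ N < j ∧ f i = x ∧ g j = x}.Infinite := by
  have hfin : (f '' Set.Iic N ∪ g '' Set.Iic N).Finite :=
    ((Set.finite_Iic N).image f).union ((Set.finite_Iic N).image g)
  refine (hV.sdiff hfin).mono fun x hx => ⟨hx.1, ?_⟩
  obtain ⟨⟨i, hi⟩, j, hj⟩ := h x hx.1
  refine ⟨i, j, ?_, ?_, hi, hj⟩
  · by_contra hc
    exact hx.2 (Or.inl ⟨i, not_lt.1 hc, hi⟩)
  · by_contra hc
    exact hx.2 (Or.inr ⟨j, not_lt.1 hc, hj⟩)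

/-- A nonzero complex number which is not a root of unity is sent to `1` by some homomorphism from
`ℂˣ` to `ℚ`, because `ℚ` is injective as an abelian group. -/
lemma exists_hom_rat {a : ℂˣ} (ha : ∀ n : ℕ, 0 < n → a ^ n ≠ 1) :
    ∃ f : Additive ℂˣ →+ ℚ, f (Additive.ofMul a) = 1 := by
  have hinj : Function.Injective (zmultiplesHom (Additive ℂˣ) (Additive.ofMul a)) := by
    rw [injective_iff_map_eq_zero]
    intro n hn
    have h1 : a ^ n = 1 := by
      rw [zmultiplesHom_apply] at hn
      exact hn
    by_contra h0
    apply ha n.natAbs (Int.natAbs_pos.2 h0)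
    rcases Int.natAbs_eq n with h | h
    · rw [h, zpow_natCast] at h1; exact h1
    · rw [h, zpow_neg, zpow_natCast, inv_eq_one] at h1; exact h1
  obtain ⟨f, hf⟩ := (Module.Baer.of_divisible ℚ).extension_property_addMonoidHom
    (zmultiplesHom (Additive ℂˣ) (Additive.ofMul a)) hinj (Int.castAddHom ℚ)
  refine ⟨f, ?_⟩
  have := DFunLike.congr_fun hf 1
  simpa using this

end iterates

section finitely_generated

/-- A polynomial with coefficients in the ring generated by `G` lifts to that ring, compatibly with
evaluation. -/
lemma exists_lift {G : Finset ℂ} {p : ℂ[X]} (hp : ∀ n, p.coeff n ∈ Algebra.adjoin ℤ (G : Set ℂ)) :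
    ∃ q : (Algebra.adjoin ℤ (G : Set ℂ))[X],
      ∀ x : Algebra.adjoin ℤ (G : Set ℂ), ((q.eval x : Algebra.adjoin ℤ (G : Set ℂ)) : ℂ)
        = p.eval (x : ℂ) := by
  have : p ∈ lifts (algebraMap (Algebra.adjoin ℤ (G : Set ℂ)) ℂ) :=
    (lifts_iff_coeff_lifts p).2 fun n => ⟨⟨_, hp n⟩, rfl⟩
  obtain ⟨q, hq⟩ := (mem_lifts p).1 this
  refine ⟨q, fun x => ?_⟩
  rw [← hq, eval_map_algebraMap]
  exact (aeval_algebraMap_apply_eq_algebraMap_eval x q).symm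

lemma coeff_mem_adjoin {G : Finset ℂ} {p : ℂ[X]} (h : p.coeffs ⊆ G) (n : ℕ) :
    p.coeff n ∈ Algebra.adjoin ℤ (G : Set ℂ) := by
  by_cases h0 : p.coeff n = 0
  · rw [h0]; exact zero_mem _
  · exact Algebra.subset_adjoin (h (coeff_mem_coeffs h0))

lemma eval_mem_adjoin {G : Finset ℂ} {p : ℂ[X]} (h : p.coeffs ⊆ G) {x : ℂ}
    (hx : x ∈ Algebra.adjoin ℤ (G : Set ℂ)) : p.eval x ∈ Algebra.adjoin ℤ (G : Set ℂ) := by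
  obtain ⟨q, hq⟩ := exists_lift (coeff_mem_adjoin h)
  rw [← hq ⟨x, hx⟩]
  exact (q.eval _).2

lemma iterate_mem_adjoin {G : Finset ℂ} {p : ℂ[X]} (h : p.coeffs ⊆ G) {x : ℂ}
    (hx : x ∈ G) (j : ℕ) : (polyIter p j).eval x ∈ Algebra.adjoin ℤ (G : Set ℂ) := by
  induction j with
  | zero => simpa [polyIter] using Algebra.subset_adjoin hx
  | succ j ih => rw [polyIter, eval_comp]; exact eval_mem_adjoin h ih

lemma isUnit_adjoin {G : Finset ℂ} {x y : Algebra.adjoin ℤ (G : Set ℂ)} (h : (x : ℂ) * y = 1) :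
    IsUnit x := IsUnit.of_mul_eq_one y (Subtype.ext h)

end finitely_generated

/-! ### Powers and sums `a ^ N + a ^ (-N)` among the values of a polynomial -/

section values
open NumberField

lemma finite_exponents {K : Type*} [Field K] {α : K} (hα0 : α ≠ 0) (hα : ∀ n : ℕ, 0 < n → α ^ n ≠ 1)
    {V : Set K} (hV : V.Finite) : {N : ℕ | α ^ N ∈ V}.Finite := by
  refine hV.preimage fun i _ j _ hij => ?_
  by_contra hne
  rcases Nat.lt_or_gt_of_ne hne with h | h
  · refine hα (j - i) (by omega) ?_
    have : α ^ i * α ^ (j - i) = α ^ i * 1 := by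
      rw [← pow_add, Nat.add_sub_cancel' h.le, mul_one]; exact hij.symm
    exact mul_left_cancel₀ (pow_ne_zero _ hα0) this
  · refine hα (i - j) (by omega) ?_
    have : α ^ j * α ^ (i - j) = α ^ j * 1 := by
      rw [← pow_add, Nat.add_sub_cancel' h.le, mul_one]; exact hij
    exact mul_left_cancel₀ (pow_ne_zero _ hα0) this

/-- A polynomial with two distinct roots takes only finitely many values which are powers of a
given number `a` on a finitely generated ring, as long as `a` is not a root of unity. -/
theorem finite_power_values {a r₁ r₂ : ℂ} (ha0 : a ≠ 0) (ha : ∀ n : ℕ, 0 < n → a ^ n ≠ 1)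
    {F : ℂ[X]} (hr : r₁ ≠ r₂) (h₁ : F.IsRoot r₁) (h₂ : F.IsRoot r₂) (G₀ : Finset ℂ) :
    {N : ℕ | ∃ y ∈ Algebra.adjoin ℤ (G₀ : Set ℂ), F.eval y = a ^ N}.Finite := by
  classical
  set G : Finset ℂ := G₀ ∪ F.coeffs ∪ {a, a⁻¹, r₁, r₂, (r₂ - r₁)⁻¹} with hG
  have hmem : ∀ x ∈ ({a, a⁻¹, r₁, r₂, (r₂ - r₁)⁻¹} : Finset ℂ),
      x ∈ Algebra.adjoin ℤ (G : Set ℂ) := fun x hx =>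
    Algebra.subset_adjoin (Finset.mem_coe.2 (Finset.mem_union_right _ hx))
  have hle : Algebra.adjoin ℤ (G₀ : Set ℂ) ≤ Algebra.adjoin ℤ (G : Set ℂ) :=
    Algebra.adjoin_mono (Finset.coe_subset.2
      (Finset.subset_union_left.trans Finset.subset_union_left))
  obtain ⟨q, hq⟩ := exists_lift (p := F) (G := G)
    (coeff_mem_adjoin (Finset.subset_union_right.trans Finset.subset_union_left))
  have hft : Algebra.FiniteType ℤ (Algebra.adjoin ℤ (G : Set ℂ)) :=
    (Subalgebra.fg_iff_finiteType _).1 ⟨G, rfl⟩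
  obtain ⟨a', ha'⟩ : ∃ x : Algebra.adjoin ℤ (G : Set ℂ), (x : ℂ) = a := ⟨⟨a, hmem _ (by simp)⟩, rfl⟩
  obtain ⟨b', hb'⟩ : ∃ x : Algebra.adjoin ℤ (G : Set ℂ), (x : ℂ) = a⁻¹ :=
    ⟨⟨_, hmem _ (by simp)⟩, rfl⟩
  obtain ⟨s₁, hs₁⟩ : ∃ x : Algebra.adjoin ℤ (G : Set ℂ), (x : ℂ) = r₁ :=
    ⟨⟨_, hmem _ (by simp)⟩, rfl⟩
  obtain ⟨s₂, hs₂⟩ : ∃ x : Algebra.adjoin ℤ (G : Set ℂ), (x : ℂ) = r₂ :=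
    ⟨⟨_, hmem _ (by simp)⟩, rfl⟩
  obtain ⟨d, hd⟩ : ∃ x : Algebra.adjoin ℤ (G : Set ℂ), (x : ℂ) = (r₂ - r₁)⁻¹ :=
    ⟨⟨_, hmem _ (by simp)⟩, rfl⟩
  have hau : IsUnit a' := isUnit_adjoin (y := b') (by rw [ha', hb', mul_inv_cancel₀ ha0])
  have hsd : (s₂ - s₁) * d = 1 := Subtype.ext (by
    push_cast
    rw [hs₁, hs₂, hd, mul_inv_cancel₀ (sub_ne_zero.2 hr.symm)])
  have hdu : IsUnit d := IsUnit.of_mul_eq_one _ (by rw [mul_comm]; exact hsd)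
  have hroot₁ : q.eval s₁ = 0 := Subtype.ext (by rw [hq, hs₁]; exact h₁)
  have hroot₂ : q.eval s₂ = 0 := Subtype.ext (by rw [hq, hs₂]; exact h₂)
  obtain ⟨K, _, _, ρ, hρ⟩ := exists_specialization G a' fun n hn h => ha n hn (by
    rw [← ha', ← SubmonoidClass.coe_pow, h]; rfl)
  obtain ⟨S, hS⟩ := exists_integral_outside ρ
  have hunit : ∀ x, IsUnit x → IsSUnit S (ρ x) := fun x hx =>
    ⟨(hx.map ρ).ne_zero, fun v hv => place_unit_eq_one (hS v hv) hx⟩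
  have hVfin : ((fun u => (q.map ρ).eval (u * ρ (s₂ - s₁) + ρ s₁)) ''
    {u : K | IsSUnit S u ∧ IsSUnit S (1 - u)}).Finite := (sunit_finite S).image _
  refine (finite_exponents (hau.map ρ).ne_zero hρ hVfin).subset ?_
  rintro N ⟨y, hy, hyN⟩
  obtain ⟨y', hy'⟩ : ∃ x : Algebra.adjoin ℤ (G : Set ℂ), (x : ℂ) = y := ⟨⟨y, hle hy⟩, rfl⟩
  -- Both `y - r₁` and `y - r₂` divide the unit `F(y) = a ^ N`.
  have hqy : q.eval y' = a' ^ N := Subtype.ext (by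
    rw [hq, hy', hyN, SubmonoidClass.coe_pow, ha'])
  have hu₁ : IsUnit (y' - s₁) := isUnit_of_dvd_unit (by
    have := sub_dvd_eval_sub y' s₁ q
    rwa [hroot₁, sub_zero, hqy] at this) (hau.pow N)
  have hu₂ : IsUnit (y' - s₂) := isUnit_of_dvd_unit (by
    have := sub_dvd_eval_sub y' s₂ q
    rwa [hroot₂, sub_zero, hqy] at this) (hau.pow N)
  refine ⟨ρ ((y' - s₁) * d), ⟨hunit _ (hu₁.mul hdu), ?_⟩, ?_⟩
  · have : 1 - ρ ((y' - s₁) * d) = ρ (-(y' - s₂) * d) := by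
      rw [← map_one ρ, ← map_sub, ← hsd]
      congr 1
      ring
    rw [this]
    exact hunit _ (hu₂.neg.mul hdu)
  · change (q.map ρ).eval (ρ ((y' - s₁) * d) * ρ (s₂ - s₁) + ρ s₁) = ρ a' ^ N
    rw [← map_mul, ← map_add, eval_map_apply, ← map_pow, ← hqy]
    congr 2
    linear_combination (y' - s₁) * hsd

/-- A polynomial `F` such that `F ^ 2 - 4` has three roots of odd multiplicity takes only finitely
many values of the form `±(a ^ N + a ^ (-N))` on a finitely generated ring, as long as `a` is not
a root of unity. -/
theorem finite_chebyshev_values {a r₁ r₂ r₃ : ℂ} (ha0 : a ≠ 0) (ha : ∀ n : ℕ, 0 < n → a ^ n ≠ 1)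
    {F q₁ q₂ q₃ : ℂ[X]} (h12 : r₁ ≠ r₂) (h13 : r₁ ≠ r₃) (h23 : r₂ ≠ r₃)
    {m₁ m₂ m₃ : ℕ} (hm₁ : Odd m₁) (hm₂ : Odd m₂) (hm₃ : Odd m₃)
    (h₁ : F ^ 2 - 4 = (X - C r₁) ^ m₁ * q₁) (h₂ : F ^ 2 - 4 = (X - C r₂) ^ m₂ * q₂)
    (h₃ : F ^ 2 - 4 = (X - C r₃) ^ m₃ * q₃) (hq₁ : q₁.eval r₁ ≠ 0) (hq₂ : q₂.eval r₂ ≠ 0)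
    (hq₃ : q₃.eval r₃ ≠ 0) (G₀ : Finset ℂ) :
    {N : ℕ | ∃ y ∈ Algebra.adjoin ℤ (G₀ : Set ℂ),
      F.eval y ^ 2 - 4 = (a ^ N - a⁻¹ ^ N) ^ 2}.Finite := by
  classical
  set E : Finset ℂ := {a, a⁻¹, r₁, r₂, r₃, (r₁ - r₂)⁻¹, (r₁ - r₃)⁻¹, (r₂ - r₃)⁻¹,
    (q₁.eval r₁)⁻¹, (q₂.eval r₂)⁻¹, (q₃.eval r₃)⁻¹} with hE
  set G : Finset ℂ := G₀ ∪ (F.coeffs ∪ q₁.coeffs ∪ q₂.coeffs ∪ q₃.coeffs) ∪ E with hG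
  have hmem : ∀ x ∈ E, ∃ x' : Algebra.adjoin ℤ (G : Set ℂ), (x' : ℂ) = x := fun x hx =>
    ⟨⟨x, Algebra.subset_adjoin (Finset.mem_coe.2 (Finset.mem_union_right _ hx))⟩, rfl⟩
  have hle : Algebra.adjoin ℤ (G₀ : Set ℂ) ≤ Algebra.adjoin ℤ (G : Set ℂ) :=
    Algebra.adjoin_mono (Finset.coe_subset.2
      (Finset.subset_union_left.trans Finset.subset_union_left))
  have hco : ∀ p : ℂ[X], p.coeffs ⊆ F.coeffs ∪ q₁.coeffs ∪ q₂.coeffs ∪ q₃.coeffs →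
      p.coeffs ⊆ G := fun p hp =>
    hp.trans (Finset.subset_union_right.trans Finset.subset_union_left)
  obtain ⟨f, hf⟩ := exists_lift (p := F) (G := G) (coeff_mem_adjoin (hco _ (by
    intro x hx; simp only [Finset.mem_union]; tauto)))
  obtain ⟨p₁, hp₁⟩ := exists_lift (p := q₁) (G := G) (coeff_mem_adjoin (hco _ (by
    intro x hx; simp only [Finset.mem_union]; tauto)))
  obtain ⟨p₂, hp₂⟩ := exists_lift (p := q₂) (G := G) (coeff_mem_adjoin (hco _ (by
    intro x hx; simp only [Finset.mem_union]; tauto)))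
  obtain ⟨p₃, hp₃⟩ := exists_lift (p := q₃) (G := G) (coeff_mem_adjoin (hco _ (by
    intro x hx; simp only [Finset.mem_union]; tauto)))
  have hft : Algebra.FiniteType ℤ (Algebra.adjoin ℤ (G : Set ℂ)) :=
    (Subalgebra.fg_iff_finiteType _).1 ⟨G, rfl⟩
  obtain ⟨a', ha'⟩ := hmem a (by simp [hE])
  obtain ⟨b', hb'⟩ := hmem a⁻¹ (by simp [hE])
  obtain ⟨s₁, hs₁⟩ := hmem r₁ (by simp [hE])
  obtain ⟨s₂, hs₂⟩ := hmem r₂ (by simp [hE])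
  obtain ⟨s₃, hs₃⟩ := hmem r₃ (by simp [hE])
  obtain ⟨d12, hd12⟩ := hmem (r₁ - r₂)⁻¹ (by simp [hE])
  obtain ⟨d13, hd13⟩ := hmem (r₁ - r₃)⁻¹ (by simp [hE])
  obtain ⟨d23, hd23⟩ := hmem (r₂ - r₃)⁻¹ (by simp [hE])
  obtain ⟨e₁, he₁⟩ := hmem (q₁.eval r₁)⁻¹ (by simp [hE])
  obtain ⟨e₂, he₂⟩ := hmem (q₂.eval r₂)⁻¹ (by simp [hE])
  obtain ⟨e₃, he₃⟩ := hmem (q₃.eval r₃)⁻¹ (by simp [hE])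
  have hab : a' * b' = 1 := Subtype.ext (by
    push_cast
    rw [ha', hb', mul_inv_cancel₀ ha0])
  have hau : IsUnit a' := IsUnit.of_mul_eq_one _ hab
  have hdiff : ∀ {x y d : Algebra.adjoin ℤ (G : Set ℂ)} {r s : ℂ}, (x : ℂ) = r → (y : ℂ) = s →
      r ≠ s → (d : ℂ) = (r - s)⁻¹ → IsUnit (x - y) := by
    intro x y d r s hx hy hrs hd
    refine isUnit_adjoin (y := d) ?_
    push_cast
    rw [hx, hy, hd, mul_inv_cancel₀ (sub_ne_zero.2 hrs)]
  have hev : ∀ {p : (Algebra.adjoin ℤ (G : Set ℂ))[X]} {q : ℂ[X]}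
      {s e : Algebra.adjoin ℤ (G : Set ℂ)} {r : ℂ},
      (∀ x : Algebra.adjoin ℤ (G : Set ℂ), ((p.eval x : Algebra.adjoin ℤ (G : Set ℂ)) : ℂ)
        = q.eval (x : ℂ)) → (s : ℂ) = r → q.eval r ≠ 0 → (e : ℂ) = (q.eval r)⁻¹ →
        IsUnit (p.eval s) := by
    intro p q s e r hpq hs hne he
    refine isUnit_adjoin (y := e) ?_
    rw [hpq, hs, he, mul_inv_cancel₀ hne]
  obtain ⟨K, _, _, ρ, hρ⟩ := exists_specialization G a' fun n hn h => ha n hn (by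
    rw [← ha', ← SubmonoidClass.coe_pow, h]; rfl)
  have hyp := hyperelliptic_finite ρ (hdiff hs₁ hs₂ h12 hd12) (hdiff hs₁ hs₃ h13 hd13)
    (hdiff hs₂ hs₃ h23 hd23) hm₁ hm₂ hm₃ (hev hp₁ hs₁ hq₁ he₁) (hev hp₂ hs₂ hq₂ he₂)
    (hev hp₃ hs₃ hq₃ he₃)
  set Y := {y : K | ∃ x s : Algebra.adjoin ℤ (G : Set ℂ), ρ x = y ∧
    s ^ 2 = (x - s₁) ^ m₁ * p₁.eval x ∧ s ^ 2 = (x - s₂) ^ m₂ * p₂.eval x ∧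
    s ^ 2 = (x - s₃) ^ m₃ * p₃.eval x} with hY
  have hab' : ρ a' * ρ b' = 1 := by rw [← map_mul, hab, map_one]
  -- If `F(y)² - 4 = (a^N - a⁻ᴺ)²`, then `a ^ N` is a root of the monic polynomial
  -- `X⁴ - (F(y)² - 2) X² + 1`.
  have hVfin : (⋃ y ∈ Y, {t : K | (X ^ 4 - C ((f.map ρ).eval y ^ 2 - 2) * X ^ 2 + 1 :
      K[X]).IsRoot t}).Finite := by
    refine hyp.biUnion fun y _ => finite_setOfPred_isRoot ?_
    intro h0
    have := congrArg (fun p => p.coeff 4) h0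
    simp only [coeff_add, coeff_sub, coeff_C_mul, coeff_X_pow, coeff_one, coeff_zero] at this
    norm_num at this
  refine (finite_exponents (hau.map ρ).ne_zero hρ hVfin).subset ?_
  rintro N ⟨y, hy, hyN⟩
  obtain ⟨y', hy'⟩ : ∃ x : Algebra.adjoin ℤ (G : Set ℂ), (x : ℂ) = y := ⟨⟨y, hle hy⟩, rfl⟩
  have hqy : f.eval y' ^ 2 - 4 = (a' ^ N - b' ^ N) ^ 2 := Subtype.ext (by
    push_cast
    rw [hf, hy', ha', hb', ← hyN]; rfl)
  have hsq : ∀ {p : (Algebra.adjoin ℤ (G : Set ℂ))[X]} {q : ℂ[X]}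
      {s : Algebra.adjoin ℤ (G : Set ℂ)} {r : ℂ} {m : ℕ},
      (∀ x : Algebra.adjoin ℤ (G : Set ℂ), ((p.eval x : Algebra.adjoin ℤ (G : Set ℂ)) : ℂ)
        = q.eval (x : ℂ)) → (s : ℂ) = r → F ^ 2 - 4 = (X - C r) ^ m * q →
        (a' ^ N - b' ^ N) ^ 2 = (y' - s) ^ m * p.eval y' := by
    intro p q s r m hpq hs hF
    refine Subtype.ext ?_
    have := congrArg (eval y) hF
    simp only [eval_sub, eval_pow, eval_mul, eval_X, eval_C, eval_ofNat] at this
    push_cast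
    rw [hpq, hy', ha', hb', hs, ← this, hyN]
  refine Set.mem_iUnion₂.2 ⟨ρ y', ⟨y', a' ^ N - b' ^ N, rfl, hsq hp₁ hs₁ h₁, hsq hp₂ hs₂ h₂,
    hsq hp₃ hs₃ h₃⟩, ?_⟩
  have h4 := congrArg ρ hqy
  have h5 : ρ a' ^ N * ρ b' ^ N = 1 := by rw [← mul_pow, hab', one_pow]
  simp only [map_sub, map_pow, map_ofNat] at h4
  simp only [Set.mem_ofPred_eq, IsRoot.def, eval_add, eval_sub, eval_mul, eval_pow, eval_X,
    eval_C, eval_one, eval_map_apply]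
  linear_combination (-(ρ a' ^ N) ^ 2) * h4 + (-(ρ a' ^ N * ρ b' ^ N) - 1 + 2 * (ρ a' ^ N) ^ 2) * h5

end values

/-! ### Power maps -/

section power_maps
open NumberField

/-- The `S`-unit equation in one variable: `m ^ j * p - q = n ^ i` has infinitely many solutions
only when `q = 0`. -/
lemma eq_zero_of_infinite_solutions {m n : ℕ} (hm : 2 ≤ m) (hn : 2 ≤ n) {p q : ℚ}
    (h : {i : ℕ | ∃ j : ℕ, (m : ℚ) ^ j * p - q = n ^ i}.Infinite) : q = 0 := by
  classical
  by_contra hq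
  have hm0 : (m : ℚ) ≠ 0 := by positivity
  have hn0 : (n : ℚ) ≠ 0 := by positivity
  have hinj : ∀ i i' : ℕ, (n : ℚ) ^ i = n ^ i' → i = i' := fun i i' hi =>
    Nat.pow_right_injective hn (by exact_mod_cast hi)
  have hp : p ≠ 0 := by
    rintro rfl
    refine h (Set.Subsingleton.finite ?_)
    rintro i ⟨j, hj⟩ i' ⟨j', hj'⟩
    exact hinj _ _ (by rw [← hj, ← hj', mul_zero, mul_zero])
  have hex : ∀ x : ℚ, x ≠ 0 → ∃ S : Finset (FinitePlace ℚ), ∀ v ∉ S, v x = 1 := by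
    intro x hx
    refine ⟨Set.Finite.toFinset (FinitePlace.hasFiniteMulSupport hx), fun v hv => ?_⟩
    by_contra hne
    exact hv ((Set.Finite.mem_toFinset _).2 hne)
  obtain ⟨S₁, hS₁⟩ := hex _ hm0
  obtain ⟨S₂, hS₂⟩ := hex _ hn0
  obtain ⟨S₃, hS₃⟩ := hex _ hp
  obtain ⟨S₄, hS₄⟩ := hex _ hq
  set S := S₁ ∪ S₂ ∪ (S₃ ∪ S₄) with hS
  have hv : ∀ v ∉ S, v (m : ℚ) = 1 ∧ v (n : ℚ) = 1 ∧ v p = 1 ∧ v q = 1 := by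
    intro v hv
    simp only [hS, Finset.mem_union, not_or] at hv
    exact ⟨hS₁ v hv.1.1, hS₂ v hv.1.2, hS₃ v hv.2.1, hS₄ v hv.2.2⟩
  refine h (((sunit_finite S).preimage (f := fun i : ℕ => -(n : ℚ) ^ i / q)
    fun i _ i' _ hi => ?_).subset ?_)
  · exact hinj _ _ (neg_injective ((div_left_inj' hq).1 hi))
  · rintro i ⟨j, hj⟩
    refine ⟨⟨div_ne_zero (neg_ne_zero.2 (pow_ne_zero _ hn0)) hq, fun v hvS => ?_⟩, ?_⟩
    · obtain ⟨_, h2, _, h4⟩ := hv v hvS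
      change v (-(n : ℚ) ^ i / q) = 1
      rw [← neg_one_mul, map_div₀, map_mul, map_pow, h2, h4, one_pow, div_one, mul_one]
      have : v (-1 : ℚ) ^ 2 = 1 := by rw [← map_pow]; simp
      exact (pow_eq_one_iff_of_nonneg (apply_nonneg v _) two_ne_zero).1 this
    · have : 1 - -(n : ℚ) ^ i / q = m ^ j * p / q := by
        rw [← hj]; field_simp; ring
      rw [this]
      refine ⟨div_ne_zero (mul_ne_zero (pow_ne_zero _ hm0) hp) hq, fun v hvS => ?_⟩
      obtain ⟨h1, _, h3, h4⟩ := hv v hvS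
      rw [map_div₀, map_mul, map_pow, h1, h3, h4]
      simp

/-- Dividing two solutions of `m ^ j * p = n ^ i` makes `m` and `n` multiplicatively dependent. -/
lemma pow_eq_pow_of_two_solutions {m n i₀ i₁ j₀ j₁ : ℕ} (hm : 2 ≤ m) (hn : 2 ≤ n) {p : ℚ}
    (h₀ : (m : ℚ) ^ j₀ * p = n ^ i₀) (h₁ : (m : ℚ) ^ j₁ * p = n ^ i₁) (hi : i₀ < i₁) :
    j₀ < j₁ ∧ m ^ (j₁ - j₀) = n ^ (i₁ - i₀) := by
  have hm1 : (1 : ℚ) < m := by exact_mod_cast hm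
  have hn1 : (1 : ℚ) < n := by exact_mod_cast hn
  have hp : 0 < p := by
    have h2 : (0 : ℚ) < (m : ℚ) ^ j₀ * p := by rw [h₀]; positivity
    exact pos_of_mul_pos_right h2 (by positivity)
  have hj : j₀ < j₁ := by
    have : (m : ℚ) ^ j₀ * p < m ^ j₁ * p := by
      rw [h₀, h₁]; exact pow_lt_pow_right₀ hn1 hi
    exact (pow_lt_pow_iff_right₀ hm1).1 (lt_of_mul_lt_mul_right this hp.le)
  refine ⟨hj, ?_⟩
  have e1 : (m : ℚ) ^ j₁ = m ^ (j₁ - j₀) * m ^ j₀ := by rw [← pow_add, Nat.sub_add_cancel hj.le]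
  have e2 : (n : ℚ) ^ i₁ = n ^ (i₁ - i₀) * n ^ i₀ := by rw [← pow_add, Nat.sub_add_cancel hi.le]
  rw [e1, e2, mul_assoc, h₀] at h₁
  have := mul_right_cancel₀ (pow_ne_zero _ (by positivity : (n : ℚ) ≠ 0)) h₁
  exact_mod_cast this

/-- A polynomial none of whose iterates has two distinct roots is a monomial. -/
lemma eq_monomial_of_iterates {B : ℂ[X]} (hB : 2 ≤ B.natDegree)
    (h : ∀ l, 1 ≤ l → ∀ r₁ r₂, (polyIter B l).IsRoot r₁ → (polyIter B l).IsRoot r₂ → r₁ = r₂) :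
    ∃ c : ℂ, c ≠ 0 ∧ B = C c * X ^ B.natDegree := by
  have hB0 : B ≠ 0 := by rintro rfl; simp at hB
  set m := B.natDegree with hm
  obtain ⟨r, hr⟩ := IsAlgClosed.exists_root B
    (fun hd => by have : B.natDegree = 0 := natDegree_eq_of_degree_eq_some hd; omega)
  have hc : B.leadingCoeff ≠ 0 := leadingCoeff_ne_zero.2 hB0
  set c := B.leadingCoeff with hcdef
  have hsplit := IsAlgClosed.splits B
  have hrep : B.roots = Multiset.replicate m r := by
    refine Multiset.eq_replicate.2 ⟨hsplit.natDegree_eq_card_roots.symm, fun s hs => ?_⟩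
    have := h 1 le_rfl s r
    rw [polyIter_one] at this
    exact this (isRoot_of_mem_roots hs) hr
  have hform : B = C c * (X - C r) ^ m := by
    have := hsplit.eq_prod_roots
    rwa [hrep, Multiset.map_replicate, Multiset.prod_replicate] at this
  refine ⟨c, hc, ?_⟩
  by_cases hr0 : r = 0
  · rwa [hr0, C_0, sub_zero] at hform
  exfalso
  obtain ⟨s, hs⟩ := IsAlgClosed.exists_pow_nat_eq (r / c) (show 0 < m by omega)
  have hs0 : s ≠ 0 := by
    rintro rfl
    rw [zero_pow (by omega)] at hs
    exact div_ne_zero hr0 hc hs.symm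
  have hζ := Complex.isPrimitiveRoot_exp m (by omega)
  set ζ := Complex.exp (2 * Real.pi * Complex.I / m)
  have hroot : ∀ t : ℂ, t ^ m = r / c → (polyIter B 2).IsRoot (r + t) := by
    intro t ht
    have h1 : B.eval (r + t) = r := by
      rw [hform]
      simp only [eval_mul, eval_C, eval_pow, eval_sub, eval_X, add_sub_cancel_left, ht]
      field_simp
    have h2 : polyIter B 2 = B.comp B := by rw [polyIter, polyIter_one]
    rw [IsRoot.def, h2, eval_comp, h1]
    exact hr
  have := h 2 (by norm_num) _ _ (hroot s hs) (hroot (ζ * s) (by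
    rw [mul_pow, hζ.pow_eq_one, one_mul, hs]))
  have h1 : ζ = 1 := by
    have h2 : s = ζ * s := add_left_cancel this
    exact mul_right_cancel₀ hs0 (by rw [← h2, one_mul])
  exact hζ.ne_one (by omega) h1

/-- The scaling by `γ` with `γ ^ (m - 1) = c` conjugates `c X ^ m` to `X ^ m`. -/
lemma iterate_monomial {γ c : ℂ} {m : ℕ} (hm : 1 ≤ m) (hγ : γ ^ (m - 1) = c) (j : ℕ) :
    C γ * polyIter (C c * X ^ m) j = (C γ * X) ^ m ^ j := by
  induction j with
  | zero => simp [polyIter]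
  | succ j ih =>
    have : γ * c = γ ^ m := by rw [← hγ, ← pow_succ', Nat.sub_add_cancel hm]
    rw [polyIter, mul_comp, C_comp, pow_comp, X_comp, ← mul_assoc, ← C_mul, this, C_pow,
      ← mul_pow, ih, ← pow_mul, ← pow_succ]

lemma iterate_pow (n k : ℕ) : polyIter (X ^ n : ℂ[X]) k = X ^ n ^ k := by
  induction k with
  | zero => simp [polyIter]
  | succ k ih => rw [polyIter, pow_comp, X_comp, ih, ← pow_mul, ← pow_succ]

/-- The theorem for the power map `z ^ n`. -/
theorem common_iterate_pow {B : ℂ[X]} (hB : 2 ≤ B.natDegree) {n : ℕ} (hn : 2 ≤ n) {a b : ℂ}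
    (h : {x | (∃ i : ℕ, a ^ n ^ i = x) ∧ ∃ j, (polyIter B j).eval b = x}.Infinite) :
    ∃ k l, 1 ≤ k ∧ 1 ≤ l ∧ polyIter (X ^ n) k = polyIter B l := by
  classical
  have hlarge := infinite_large_indices h (fun x hx => hx)
  have hidx : ∀ N, {i : ℕ | ∃ j, N < j ∧ a ^ n ^ i = (polyIter B j).eval b}.Infinite := by
    intro N hfin
    refine hlarge N ((hfin.image fun i => a ^ n ^ i).subset ?_)
    rintro x ⟨-, i, j, -, hj, hi, hjx⟩
    exact ⟨i, ⟨j, hj, hi.trans hjx.symm⟩, hi⟩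
  have hainf : {x | ∃ i : ℕ, a ^ n ^ i = x}.Infinite := h.mono fun x hx => hx.1
  have ha0 : a ≠ 0 := by
    rintro rfl
    refine hainf ((Set.finite_singleton (0 : ℂ)).subset ?_)
    rintro x ⟨i, rfl⟩
    exact zero_pow (by positivity)
  have ha : ∀ k : ℕ, 0 < k → a ^ k ≠ 1 := by
    intro k hk h1
    refine hainf (((Set.finite_lt_nat k).image fun t => a ^ t).subset ?_)
    rintro x ⟨i, rfl⟩
    exact ⟨n ^ i % k, Nat.mod_lt _ hk, (pow_eq_pow_mod _ h1).symm⟩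
  obtain ⟨c, hc, hBc⟩ : ∃ c : ℂ, c ≠ 0 ∧ B = C c * X ^ B.natDegree := by
    refine eq_monomial_of_iterates hB fun l hl r₁ r₂ h₁ h₂ => ?_
    by_contra hne
    have hfin := finite_power_values ha0 ha hne h₁ h₂ (B.coeffs ∪ {b})
    refine hidx l ((hfin.preimage (f := fun i : ℕ => n ^ i)
      (Nat.pow_right_injective hn).injOn).subset ?_)
    rintro i ⟨j, hj, hij⟩
    refine ⟨(polyIter B (j - l)).eval b,
      iterate_mem_adjoin Finset.subset_union_left (by simp) _, ?_⟩
    rw [← eval_comp, ← polyIter_add, Nat.add_sub_cancel' hj.le, hij]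
  set m := B.natDegree with hm
  obtain ⟨γ, hγ⟩ := IsAlgClosed.exists_pow_nat_eq c (show 0 < m - 1 by omega)
  have hγ0 : γ ≠ 0 := by
    rintro rfl
    rw [zero_pow (by omega)] at hγ
    exact hc hγ.symm
  have hiter : ∀ j, C γ * polyIter B j = (C γ * X) ^ m ^ j := by
    intro j
    rw [hBc]
    exact iterate_monomial (by omega) hγ j
  have hval : ∀ j x, γ * (polyIter B j).eval x = (γ * x) ^ m ^ j := by
    intro j x
    have := congrArg (eval x) (hiter j)
    simpa using this
  have hb0 : b ≠ 0 := by
    rintro rfl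
    obtain ⟨i, j, -, hij⟩ := (hidx 0).nonempty
    have h1 := hval j 0
    rw [← hij, mul_zero, zero_pow (by positivity)] at h1
    exact mul_ne_zero hγ0 (pow_ne_zero _ ha0) h1
  obtain ⟨f, hf⟩ := exists_hom_rat (a := Units.mk0 a ha0) fun k hk h1 =>
    ha k hk (by simpa using congrArg Units.val h1)
  set p := f (Additive.ofMul (Units.mk0 γ hγ0 * Units.mk0 b hb0))
  set q := f (Additive.ofMul (Units.mk0 γ hγ0))
  have hlin : ∀ i j, a ^ n ^ i = (polyIter B j).eval b → (m : ℚ) ^ j * p - q = n ^ i := by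
    intro i j hij
    have h1 := hval j b
    rw [← hij] at h1
    have h2 : Units.mk0 γ hγ0 * Units.mk0 a ha0 ^ n ^ i =
        (Units.mk0 γ hγ0 * Units.mk0 b hb0) ^ m ^ j := Units.ext (by simpa using h1)
    have h3 := congrArg (fun u => f (Additive.ofMul u)) h2
    simp only [ofMul_mul, ofMul_pow, map_add, map_nsmul, hf] at h3
    simp only [nsmul_eq_mul, Nat.cast_pow, mul_one] at h3
    simp only [p, q, ofMul_mul, map_add]
    linarith
  have hq : q = 0 := by
    refine eq_zero_of_infinite_solutions (by omega : 2 ≤ m) hn (p := p) ((hidx 0).mono ?_)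
    rintro i ⟨j, -, hij⟩
    exact ⟨j, hlin i j hij⟩
  obtain ⟨i₀, j₀, -, h₀⟩ := (hidx 0).nonempty
  obtain ⟨i₁, ⟨j₁, -, h₁⟩, hi⟩ := (hidx 0).exists_gt i₀
  have e₀ := hlin i₀ j₀ h₀
  have e₁ := hlin i₁ j₁ h₁
  rw [hq, sub_zero] at e₀ e₁
  obtain ⟨hj, hpow⟩ := pow_eq_pow_of_two_solutions (by omega) hn e₀ e₁ hi
  refine ⟨i₁ - i₀, j₁ - j₀, by omega, by omega, ?_⟩
  have hx : (polyIter B (j₁ - j₀)).eval (a ^ n ^ i₀) = (a ^ n ^ i₀) ^ n ^ (i₁ - i₀) := by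
    rw [h₀, ← eval_comp, ← polyIter_add, Nat.sub_add_cancel hj.le, ← h₁, ← h₀, ← pow_mul,
      ← pow_add, Nat.add_sub_cancel' hi.le]
  have hγM : γ = γ ^ m ^ (j₁ - j₀) := by
    have h1 := hval (j₁ - j₀) (a ^ n ^ i₀)
    rw [hx, mul_pow, hpow] at h1
    rw [hpow]
    exact mul_right_cancel₀ (pow_ne_zero _ (pow_ne_zero _ ha0)) h1
  have h1 := hiter (j₁ - j₀)
  rw [mul_pow, ← C_pow, ← hγM] at h1
  rw [iterate_pow, ← hpow]
  exact (mul_left_cancel₀ (C_ne_zero.2 hγ0) h1).symm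

end power_maps

/-! ### Chebyshev polynomials and the Pell equation -/

section chebyshev_facts

/-- The polynomial `D_n` with `D_n(u + u⁻¹) = u ^ n + u ^ (-n)`, that is `2 T_n(x / 2)`. -/
noncomputable def vieta (n : ℕ) : ℂ[X] := Chebyshev.C ℂ (n : ℤ)

lemma exists_add_inv (z : ℂ) : ∃ u : ℂ, u ≠ 0 ∧ z = u + u⁻¹ := by
  obtain ⟨s, hs⟩ := IsAlgClosed.exists_pow_nat_eq (z ^ 2 - 4) (show 0 < 2 by norm_num)
  have h : (z + s) / 2 * ((z - s) / 2) = 1 := by linear_combination -hs / 4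
  refine ⟨(z + s) / 2, left_ne_zero_of_mul_eq_one h, ?_⟩
  rw [← eq_inv_of_mul_eq_one_right h]
  ring

lemma vieta_eval (n : ℕ) {u : ℂ} (hu : u ≠ 0) : (vieta n).eval (u + u⁻¹) = u ^ n + u⁻¹ ^ n := by
  rw [vieta, ← dickson_one_one_eq_chebyshev_C]
  exact dickson_one_one_eval_add_inv u u⁻¹ (mul_inv_cancel₀ hu) n

lemma vieta_comp (m n : ℕ) : (vieta m).comp (vieta n) = vieta (m * n) := by
  rw [vieta, vieta, vieta, Nat.cast_mul, Chebyshev.C_mul]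

lemma vieta_one : vieta 1 = X := by simp [vieta]

lemma ext_add_inv {p q : ℂ[X]} (h : ∀ u : ℂ, u ≠ 0 → p.eval (u + u⁻¹) = q.eval (u + u⁻¹)) :
    p = q := by
  refine Polynomial.funext fun z => ?_
  obtain ⟨u, hu, rfl⟩ := exists_add_inv z
  exact h u hu

/-- Parity of `D_n`. -/
lemma vieta_comp_sign (n : ℕ) {ε : ℂ} (hε : ε ^ 2 = 1) :
    (vieta n).comp (C ε * X) = C (ε ^ n) * vieta n := by
  have hε0 : ε ≠ 0 := by rintro rfl; norm_num at hε
  have hinv : ε⁻¹ = ε := inv_eq_of_mul_eq_one_left (by rw [← sq, hε])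
  refine ext_add_inv fun u hu => ?_
  have h1 : ε * (u + u⁻¹) = ε * u + (ε * u)⁻¹ := by rw [mul_inv, hinv]; ring
  simp only [eval_comp, eval_mul, eval_C, eval_X]
  rw [h1, vieta_eval n (mul_ne_zero hε0 hu), vieta_eval n hu, mul_inv, hinv, mul_pow, mul_pow]
  ring

lemma vieta_add_two (n : ℕ) : vieta (n + 2) = X * vieta (n + 1) - vieta n := by
  have := Chebyshev.C_add_two ℂ n
  simp only [vieta]
  exact_mod_cast this

lemma vieta_coeff_aux (n : ℕ) :
    ((∀ k, n + 1 < k → (vieta (n + 1)).coeff k = 0) ∧ (vieta (n + 1)).coeff (n + 1) = 1 ∧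
      (vieta (n + 1)).coeff n = 0) ∧
    ((∀ k, n + 2 < k → (vieta (n + 2)).coeff k = 0) ∧ (vieta (n + 2)).coeff (n + 2) = 1 ∧
      (vieta (n + 2)).coeff (n + 1) = 0 ∧ (vieta (n + 2)).coeff n = -(n + 2 : ℂ)) := by
  induction n with
  | zero =>
    have h2 : vieta 2 = X ^ 2 - C 2 := by
      have : vieta 2 = X * vieta 1 - vieta 0 := vieta_add_two 0
      rw [this, vieta_one, vieta, Nat.cast_zero, Chebyshev.C_zero, C_ofNat]; ring
    simp only [zero_add, vieta_one, h2]
    refine ⟨⟨fun k hk => ?_, ?_, ?_⟩, fun k hk => ?_, ?_, ?_, ?_⟩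
    · rw [coeff_X, if_neg (by omega)]
    · simp
    · simp
    · rw [coeff_sub, coeff_X_pow, coeff_C, if_neg (by omega), if_neg (by omega), sub_zero]
    · simp [coeff_X_pow]
    · simp [coeff_X_pow]
    · simp [coeff_X_pow, coeff_C]
  | succ n ih =>
    obtain ⟨⟨a1, a2, a3⟩, b1, b2, b3, b4⟩ := ih
    refine ⟨⟨b1, b2, b3⟩, ?_⟩
    have h := vieta_add_two (n + 1)
    simp only [show n + 1 + 2 = n + 3 by ring, show n + 1 + 1 = n + 2 by ring] at h ⊢
    rw [h]
    refine ⟨fun k hk => ?_, ?_, ?_, ?_⟩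
    · obtain ⟨k, rfl⟩ : ∃ k', k = k' + 1 := ⟨k - 1, by omega⟩
      rw [coeff_sub, coeff_X_mul, b1 k (by omega), a1 (k + 1) (by omega), sub_zero]
    · rw [coeff_sub, coeff_X_mul, b2, a1 _ (by omega), sub_zero]
    · rw [coeff_sub, coeff_X_mul, b3, a1 _ (by omega), sub_zero]
    · rw [coeff_sub, coeff_X_mul, b4, a2]
      push_cast
      ring

lemma vieta_coeff (n : ℕ) : (vieta (n + 2)).coeff (n + 2) = 1 ∧
    (vieta (n + 2)).coeff (n + 1) = 0 ∧ (vieta (n + 2)).coeff n = -(n + 2 : ℂ) :=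
  (vieta_coeff_aux n).2.2

lemma vieta_natDegree_le (n : ℕ) : (vieta (n + 2)).natDegree ≤ n + 2 :=
  natDegree_le_iff_coeff_eq_zero.2 (vieta_coeff_aux n).2.1

/-- The polynomial `u ^ d * P(u + u⁻¹)` in `u`. -/
noncomputable def recip (P : ℂ[X]) (d : ℕ) : ℂ[X] :=
  ∑ i ∈ Finset.range (d + 1), C (P.coeff i) * (X ^ 2 + 1) ^ i * X ^ (d - i)

lemma recip_eval {P : ℂ[X]} {d : ℕ} (hP : P.natDegree ≤ d) {u : ℂ} (hu : u ≠ 0) :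
    (recip P d).eval u = u ^ d * P.eval (u + u⁻¹) := by
  rw [recip, eval_finsetSum, eval_eq_sum_range' (Nat.lt_succ_of_le hP), Finset.mul_sum]
  refine Finset.sum_congr rfl fun i hi => ?_
  have hid : i ≤ d := Nat.lt_succ_iff.1 (Finset.mem_range.1 hi)
  simp only [eval_mul, eval_C, eval_pow, eval_add, eval_X, eval_one]
  have h1 : u ^ d = u ^ (d - i) * u ^ i := by rw [← pow_add, Nat.sub_add_cancel hid]
  have h2 : u ^ 2 + 1 = u * (u + u⁻¹) := by field_simp
  rw [h1, h2, mul_pow]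
  ring

lemma recip_eval_zero (P : ℂ[X]) (d : ℕ) : (recip P d).eval 0 = P.coeff d := by
  rw [recip, eval_finsetSum, Finset.sum_eq_single d]
  · simp
  · intro i hi hid
    have : d - i ≠ 0 := by have := Finset.mem_range.1 hi; omega
    simp [this]
  · simp

/-- The polynomial Pell equation `P ^ 2 - (X ^ 2 - 4) K ^ 2 = 4` has only the solutions
`P = ± D_d`: in terms of `u` with `X = u + u⁻¹`, the left side factors and both factors have to
be monomials in `u`. -/
lemma pell {P K : ℂ[X]} (hd : 1 ≤ P.natDegree) (h : P ^ 2 - 4 = (X ^ 2 - 4) * K ^ 2) :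
    ∃ ε : ℂ, ε ^ 2 = 1 ∧ P = C ε * vieta P.natDegree := by
  set d := P.natDegree with hddef
  have hlc : P.coeff d ≠ 0 := by
    rw [hddef, coeff_natDegree, leadingCoeff_ne_zero]
    intro h0
    rw [hddef, h0, natDegree_zero] at hd
    omega
  have hP4 : (P ^ 2 - 4 : ℂ[X]).natDegree = 2 * d := by
    rw [show (4 : ℂ[X]) = C 4 from (C_ofNat 4).symm, natDegree_sub_C, natDegree_pow]
  have hK0 : K ≠ 0 := by
    rintro rfl
    rw [h, zero_pow two_ne_zero, mul_zero, natDegree_zero] at hP4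
    omega
  have hX4 : (X ^ 2 - 4 : ℂ[X]).natDegree = 2 := by
    rw [show (4 : ℂ[X]) = C 4 from (C_ofNat 4).symm, natDegree_sub_C, natDegree_X_pow]
  have hKd : K.natDegree + 1 = d := by
    rw [h, natDegree_mul (by intro h0; rw [h0] at hX4; simp at hX4) (pow_ne_zero _ hK0), hX4,
      natDegree_pow] at hP4
    omega
  set f := recip P d with hf
  set g := (X ^ 2 - 1) * recip K (d - 1) with hg
  have hfe : ∀ u : ℂ, u ≠ 0 → f.eval u = u ^ d * P.eval (u + u⁻¹) := fun u hu =>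
    recip_eval le_rfl hu
  have hprod : (f + g) * (f - g) = C 4 * X ^ (2 * d) := by
    refine mul_left_cancel₀ X_ne_zero (Polynomial.funext fun u => ?_)
    rcases eq_or_ne u 0 with rfl | hu
    · simp
    have h1 := congrArg (eval (u + u⁻¹)) h
    have h2 : g.eval u = u ^ d * ((u - u⁻¹) * K.eval (u + u⁻¹)) := by
      rw [hg, eval_mul, recip_eval (by omega) hu]
      have : u ^ d = u ^ (d - 1) * u := by rw [← pow_succ, Nat.sub_add_cancel hd]
      rw [this]
      simp only [eval_sub, eval_pow, eval_X, eval_one]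
      field_simp
    simp only [eval_sub, eval_mul, eval_pow, eval_X, eval_add, eval_C, eval_ofNat] at h1 ⊢
    rw [h2, hfe u hu]
    have h3 : u * u⁻¹ = 1 := mul_inv_cancel₀ hu
    linear_combination u * u ^ (2 * d) * h1 + 4 * u * u ^ (2 * d) * eval (u + u⁻¹) K ^ 2 * h3
  obtain ⟨k, hk, hassoc⟩ := (dvd_prime_pow prime_X (2 * d)).1
    ((isUnit_C.2 (by norm_num : IsUnit (4 : ℂ))).dvd_mul_left.1 (Dvd.intro _ hprod))
  obtain ⟨w, hw⟩ := hassoc.symm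
  obtain ⟨c, hc, hcw⟩ := Polynomial.isUnit_iff.1 w.isUnit
  have hc0 : c ≠ 0 := hc.ne_zero
  have hplus : f + g = X ^ k * C c := by rw [← hw, hcw]
  have hminus : f - g = C (4 / c) * X ^ (2 * d - k) := by
    refine mul_left_cancel₀ (mul_ne_zero (pow_ne_zero k X_ne_zero) (C_ne_zero.2 hc0)) ?_
    rw [← hplus, hprod, hplus]
    have h1 : (C c * C (4 / c) : ℂ[X]) = C 4 := by rw [← C_mul]; congr 1; field_simp
    have h2 : (X : ℂ[X]) ^ (2 * d) = X ^ k * X ^ (2 * d - k) := by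
      rw [← pow_add, Nat.add_sub_cancel' hk]
    rw [h2, ← h1]
    ring
  have h2f : ∀ u, 2 * f.eval u = u ^ k * c + 4 / c * u ^ (2 * d - k) := by
    intro u
    have h1 := congrArg (eval u) hplus
    have h2 := congrArg (eval u) hminus
    simp only [eval_add, eval_sub, eval_mul, eval_pow, eval_X, eval_C] at h1 h2
    linear_combination h1 + h2
  -- Since `f(0) ≠ 0`, one of the two exponents vanishes.
  obtain ⟨α, β, hαβ, hform⟩ : ∃ α β : ℂ, α * β = 1 ∧ ∀ u, f.eval u = α + β * u ^ (2 * d) := by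
    have h0 := h2f 0
    rw [hf, recip_eval_zero] at h0
    rcases Nat.eq_zero_or_pos k with hk0 | hkpos
    · refine ⟨c / 2, 2 / c, by field_simp, fun u => ?_⟩
      have := h2f u
      rw [hk0, pow_zero, Nat.sub_zero] at this
      linear_combination this / 2
    · rcases Nat.eq_zero_or_pos (2 * d - k) with hk1 | hk1
      · refine ⟨2 / c, c / 2, by field_simp, fun u => ?_⟩
        have := h2f u
        rw [hk1, pow_zero, show k = 2 * d by omega] at this
        linear_combination this / 2
      · rw [zero_pow hkpos.ne', zero_pow hk1.ne'] at h0
        exact absurd (by linear_combination h0 / 2) hlc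
  have heq : α = β := by
    have e1 := hfe 2 (by norm_num)
    have e2 := hfe 2⁻¹ (by norm_num)
    rw [inv_inv, add_comm (2⁻¹ : ℂ) 2] at e2
    rw [hform] at e1 e2
    have e3 : (2 : ℂ) ^ d * 2⁻¹ ^ d = 1 := by rw [← mul_pow]; norm_num
    have e4 : α + β * 2 ^ (2 * d) = 2 ^ (2 * d) * (α + β * 2⁻¹ ^ (2 * d)) := by
      rw [e1, e2]
      linear_combination (-(2 : ℂ) ^ d * eval (2 + 2⁻¹) P) * e3
    have e5 : (2 : ℂ) ^ (2 * d) * 2⁻¹ ^ (2 * d) = 1 := by rw [← mul_pow]; norm_num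
    have e6 : (2 : ℂ) ^ (2 * d) ≠ 1 := by
      intro hh
      have h1 : (2 : ℕ) ^ (2 * d) = 1 := by exact_mod_cast hh
      have h2 := Nat.one_lt_two_pow (n := 2 * d) (by omega)
      omega
    have e7 : (α - β) * ((2 : ℂ) ^ (2 * d) - 1) = 0 := by linear_combination -e4 - β * e5
    rcases mul_eq_zero.1 e7 with h1 | h1
    · exact sub_eq_zero.1 h1
    · exact absurd (sub_eq_zero.1 h1) e6
  refine ⟨α, by rw [sq]; nth_rw 2 [heq]; exact hαβ, ext_add_inv fun u hu => ?_⟩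
  rw [eval_mul, eval_C, vieta_eval d hu]
  refine mul_left_cancel₀ (pow_ne_zero d hu) ?_
  rw [← hfe u hu, hform, ← heq]
  have h1 : u ^ d * u⁻¹ ^ d = 1 := by rw [← mul_pow, mul_inv_cancel₀ hu, one_pow]
  linear_combination -α * h1

end chebyshev_facts

/-! ### Rigidity of Chebyshev polynomials -/

section rigidity

/-- `G` has at most two roots of odd multiplicity. -/
def FewOddRoots (G : ℂ[X]) : Prop :=
  ∀ r₁ r₂ r₃, Odd (G.rootMultiplicity r₁) → Odd (G.rootMultiplicity r₂) →
    Odd (G.rootMultiplicity r₃) → r₁ = r₂ ∨ r₁ = r₃ ∨ r₂ = r₃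

lemma FewOddRoots.of_mul_sq {G H : ℂ[X]} {e : ℂ} (h0 : C e * G * H ^ 2 ≠ 0)
    (h : FewOddRoots (C e * G * H ^ 2)) : FewOddRoots G := by
  have key : ∀ r, Odd (G.rootMultiplicity r) → Odd ((C e * G * H ^ 2).rootMultiplicity r) := by
    intro r hr
    rw [rootMultiplicity_mul h0, rootMultiplicity_mul (left_ne_zero_of_mul h0),
      rootMultiplicity_C, zero_add, sq,
      rootMultiplicity_mul (by rw [← sq]; exact right_ne_zero_of_mul h0)]
    exact hr.add_even ⟨_, rfl⟩
  exact fun r₁ r₂ r₃ h₁ h₂ h₃ => h r₁ r₂ r₃ (key _ h₁) (key _ h₂) (key _ h₃)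

/-- Over `ℂ`, a polynomial is the product of the linear factors at its roots of odd multiplicity
and of a square. -/
lemma exists_odd_part (G : ℂ[X]) : ∃ (T : Finset ℂ) (H : ℂ[X]),
    G = (∏ r ∈ T, (X - C r)) * H ^ 2 ∧ ∀ r ∈ T, Odd (G.rootMultiplicity r) := by
  classical
  obtain ⟨s, hs⟩ := IsAlgClosed.exists_pow_nat_eq G.leadingCoeff (show 0 < 2 by norm_num)
  set T := G.roots.toFinset.filter fun r => Odd (G.rootMultiplicity r) with hT
  refine ⟨T, C s * ∏ r ∈ G.roots.toFinset, (X - C r) ^ (G.rootMultiplicity r / 2), ?_,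
    fun r hr => (Finset.mem_filter.1 hr).2⟩
  have h1 := (IsAlgClosed.splits G).eq_prod_roots
  rw [Finset.prod_multiset_map_count] at h1
  simp only [count_roots] at h1
  conv_lhs => rw [h1]
  rw [mul_pow, ← C_pow, hs, ← Finset.prod_pow, hT, Finset.prod_filter, mul_left_comm,
    ← Finset.prod_mul_distrib]
  congr 1
  refine Finset.prod_congr rfl fun r _ => ?_
  rw [← pow_mul]
  split_ifs with ho
  · rw [← pow_succ']
    congr 1
    have := Nat.odd_iff.1 ho
    omega
  · rw [one_mul]
    congr 1
    have := Nat.even_iff.1 (Nat.not_odd_iff_even.1 ho)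
    omega

/-- If `P ^ 2 - 4` has at most two roots of odd multiplicity, then `P` is `± D_d` up to an affine
change of variable. -/
lemma affine_chebyshev {P : ℂ[X]} (hd : 1 ≤ P.natDegree) (h : FewOddRoots (P ^ 2 - 4)) :
    ∃ (α γ ε e : ℂ) (H : ℂ[X]), γ ≠ 0 ∧ e ≠ 0 ∧ ε ^ 2 = 1 ∧
      P.comp (C α + C γ * X) = C ε * vieta P.natDegree ∧
      P ^ 2 - 4 = C e * ((C γ⁻¹ * (X - C α)) ^ 2 - 4) * H ^ 2 := by
  classical
  set d := P.natDegree with hddef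
  have h4 : (4 : ℂ[X]) = C 4 := (C_ofNat 4).symm
  have hdeg : (P ^ 2 - 4 : ℂ[X]).natDegree = 2 * d := by
    rw [h4, natDegree_sub_C, natDegree_pow]
  have hG0 : P ^ 2 - 4 ≠ 0 := by
    intro h0
    rw [h0, natDegree_zero] at hdeg
    omega
  obtain ⟨T, H, hTH, hodd⟩ := exists_odd_part (P ^ 2 - 4)
  have hH0 : H ≠ 0 := by
    rintro rfl
    exact hG0 (by rw [hTH]; simp)
  have hprod0 : (∏ r ∈ T, (X - C r) : ℂ[X]) ≠ 0 :=
    Finset.prod_ne_zero_iff.2 fun r _ => X_sub_C_ne_zero r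
  have hcard : T.card ≤ 2 := by
    by_contra hlt
    obtain ⟨r₁, m₁, r₂, m₂, r₃, m₃, n12, n13, n23⟩ := Finset.two_lt_card.1 (not_le.1 hlt)
    rcases h r₁ r₂ r₃ (hodd _ m₁) (hodd _ m₂) (hodd _ m₃) with hh | hh | hh
    · exact n12 hh
    · exact n13 hh
    · exact n23 hh
  have hsum : T.card + 2 * H.natDegree = 2 * d := by
    rw [← hdeg, hTH, natDegree_mul hprod0 (pow_ne_zero _ hH0), natDegree_pow,
      natDegree_prod_of_monic _ _ fun r _ => monic_X_sub_C r]
    simp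
  have hT2 : T.card = 2 := by
    by_contra hne
    have hT0 : T = ∅ := Finset.card_eq_zero.1 (by omega)
    rw [hT0, Finset.prod_empty, one_mul] at hTH
    -- `P ^ 2 - 4 = H ^ 2` makes `P - H` and `P + H` constant.
    have hunit : (P - H) * (P + H) = C 4 := by rw [← h4]; linear_combination hTH
    have hu : IsUnit ((P - H) * (P + H)) := by
      rw [hunit]; exact isUnit_C.2 (by norm_num)
    have u1 := natDegree_eq_zero_of_isUnit (isUnit_of_mul_isUnit_left hu)
    have u2 := natDegree_eq_zero_of_isUnit (isUnit_of_mul_isUnit_right hu)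
    have h2P : (C 2 * P).natDegree ≤ max (P - H).natDegree (P + H).natDegree := by
      have : C 2 * P = (P - H) + (P + H) := by rw [C_ofNat]; ring
      rw [this]
      exact natDegree_add_le _ _
    rw [natDegree_C_mul (by norm_num : (2 : ℂ) ≠ 0), u1, u2] at h2P
    simp only [max_self] at h2P
    omega
  obtain ⟨r, s, hrs, rfl⟩ := Finset.card_eq_two.1 hT2
  rw [Finset.prod_pair hrs] at hTH
  have hγ : (r - s) / 4 ≠ 0 := div_ne_zero (sub_ne_zero.2 hrs) (by norm_num)
  have hcompdeg : (P.comp (C ((r + s) / 2) + C ((r - s) / 4) * X)).natDegree = d := by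
    rw [natDegree_comp, natDegree_C_add, natDegree_C_mul_X _ hγ, mul_one]
  have hr : C r = C ((r + s) / 2) + 2 * C ((r - s) / 4) := by
    rw [← C_ofNat, ← C_mul, ← C_add]; congr 1; ring
  have hs : C s = C ((r + s) / 2) - 2 * C ((r - s) / 4) := by
    rw [← C_ofNat, ← C_mul, ← C_sub]; congr 1; ring
  have hfac : ((X - C r) * (X - C s) : ℂ[X]) =
      (X - C ((r + s) / 2)) ^ 2 - 4 * C ((r - s) / 4) ^ 2 := by
    rw [hr, hs]; ring
  have hpell : P.comp (C ((r + s) / 2) + C ((r - s) / 4) * X) ^ 2 - 4 =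
      (X ^ 2 - 4) * (C ((r - s) / 4) * H.comp (C ((r + s) / 2) + C ((r - s) / 4) * X)) ^ 2 := by
    have := congrArg (fun p => p.comp (C ((r + s) / 2) + C ((r - s) / 4) * X)) hTH
    simp only [hfac, h4, sub_comp, mul_comp, pow_comp, C_comp, X_comp] at this
    rw [h4, this]
    ring
  obtain ⟨ε, hε, hPε⟩ := pell (by rw [hcompdeg]; exact hd) hpell
  rw [hcompdeg] at hPε
  refine ⟨(r + s) / 2, (r - s) / 4, ε, ((r - s) / 4) ^ 2, H, hγ, pow_ne_zero _ hγ, hε, hPε, ?_⟩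
  rw [hTH, hfac]
  have : (C ((r - s) / 4) * C ((r - s) / 4)⁻¹ : ℂ[X]) = 1 := by
    rw [← C_mul, mul_inv_cancel₀ hγ, C_1]
  rw [C_pow]
  congr 1
  linear_combination (-(X - C ((r + s) / 2)) ^ 2 * (C ((r - s) / 4) * C ((r - s) / 4)⁻¹ + 1)) * this

lemma coeff_comp_affine {m : ℕ} (κ δ : ℂ) (p : ℂ[X]) :
    (p.comp (C κ + C δ * X)).coeff m = (hasseDeriv m p).eval κ * δ ^ m := by
  have : p.comp (C κ + C δ * X) = (taylor κ p).comp (C δ * X) := by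
    rw [taylor_apply, comp_assoc]
    congr 1
    simp only [add_comp, X_comp, C_comp]
    ring
  rw [this, comp_C_mul_X_coeff, taylor_coeff]

/-- Comparison of the three leading coefficients in an affine relation between `D_m` and itself.
-/
lemma affine_relation {n : ℕ} {ε κ δ α g : ℂ} (hε : ε ^ 2 = 1) (hδ : δ ≠ 0)
    (h : C ε * (vieta (n + 2)).comp (C κ + C δ * X) = C α + C g * vieta (n + 2)) :
    κ = 0 ∧ ε * δ ^ (n + 2) = g ∧ (n ≠ 0 → δ ^ 2 = 1) ∧ (n = 0 → -2 * ε = α - 2 * g) := by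
  have hε0 : ε ≠ 0 := by rintro rfl; norm_num at hε
  obtain ⟨c0, c1, c2⟩ := vieta_coeff n
  have hdeg := vieta_natDegree_le n
  have hκ : κ = 0 := by
    have h1 := congrArg (fun p => p.coeff (n + 1)) h
    simp only [coeff_C_mul, coeff_comp_affine, coeff_add, coeff_C_succ, c1] at h1
    have h2 : (hasseDeriv (n + 1) (vieta (n + 2))).eval κ = (n + 2) * κ := by
      rw [eval_eq_sum_range' (n := 2)
        ((natDegree_hasseDeriv_le _ _).trans_lt (by omega)), Finset.sum_range_succ,
        Finset.sum_range_one, hasseDeriv_coeff, hasseDeriv_coeff, zero_add, c1,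
        show 1 + (n + 1) = n + 2 by ring, c0, show n + 2 = (n + 1) + 1 by ring,
        Nat.choose_succ_self_right]
      push_cast
      ring
    rw [h2, mul_zero, add_zero] at h1
    have hn : (n + 2 : ℂ) ≠ 0 := by exact_mod_cast (show n + 2 ≠ 0 by omega)
    have h3 := (mul_eq_zero.1 h1).resolve_left hε0
    have h4 := (mul_eq_zero.1 h3).resolve_right (pow_ne_zero _ hδ)
    exact (mul_eq_zero.1 h4).resolve_left hn
  subst hκ
  rw [C_0, zero_add] at h
  have hlead : ε * δ ^ (n + 2) = g := by
    have h1 := congrArg (fun p => p.coeff (n + 2)) h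
    simpa only [coeff_C_mul, comp_C_mul_X_coeff, coeff_add, coeff_C_succ, c0, one_mul, zero_add,
      mul_one] using h1
  have h1 := congrArg (fun p => p.coeff n) h
  simp only [coeff_C_mul, comp_C_mul_X_coeff, coeff_add, c2] at h1
  refine ⟨rfl, hlead, fun hn => ?_, fun hn => ?_⟩
  · rw [coeff_C_of_ne_zero hn, ← hlead] at h1
    have hn' : (n + 2 : ℂ) ≠ 0 := by exact_mod_cast (show n + 2 ≠ 0 by omega)
    have h2 : ε * (n + 2) * δ ^ n * (δ ^ 2 - 1) = 0 := by linear_combination h1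
    exact sub_eq_zero.1 ((mul_eq_zero.1 h2).resolve_left
      (mul_ne_zero (mul_ne_zero hε0 hn') (pow_ne_zero _ hδ)))
  · subst hn
    rw [coeff_C_zero] at h1
    simp only [pow_zero, Nat.cast_zero] at h1
    linear_combination h1

/-- If the values of `P ^ 2 - 4` and of `N ^ 2 - 4` agree up to squares, with `N` affine, then the
condition on roots of odd multiplicity is inherited by `N ∘ Q` from `P ∘ Q`. -/
lemma FewOddRoots.transfer {P N H Q : ℂ[X]} {e : ℂ}
    (hP : P ^ 2 - 4 = C e * (N ^ 2 - 4) * H ^ 2) (hPd : 1 ≤ P.natDegree) (hQd : 1 ≤ Q.natDegree)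
    (h : FewOddRoots ((P.comp Q) ^ 2 - 4)) : FewOddRoots ((N.comp Q) ^ 2 - 4) := by
  have h4 : (4 : ℂ[X]) = C 4 := (C_ofNat 4).symm
  have hcomp : (P.comp Q) ^ 2 - 4 = C e * ((N.comp Q) ^ 2 - 4) * (H.comp Q) ^ 2 := by
    have := congrArg (fun p => p.comp Q) hP
    simpa only [h4, sub_comp, mul_comp, pow_comp, C_comp] using this
  have h0 : (P.comp Q) ^ 2 - 4 ≠ 0 := by
    intro h0
    have h1 : ((P.comp Q) ^ 2 - 4 : ℂ[X]).natDegree = 2 * (P.natDegree * Q.natDegree) := by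
      rw [h4, natDegree_sub_C, natDegree_pow, natDegree_comp]
    rw [h0, natDegree_zero] at h1
    have := Nat.mul_pos hPd hQd
    omega
  rw [hcomp] at h h0
  exact h.of_mul_sq h0

/-- A polynomial `B` all of whose iterates `F` are such that `F ^ 2 - 4` has at most two roots of
odd multiplicity is `± D_m`. The first three iterates give affine relations `B ∘ M₁ = ± D_m`,
`M₁⁻¹ ∘ B ∘ M₂ = ± D_m` and `M₂⁻¹ ∘ B ∘ M₃ = ± D_m`, which together force `M₁ = ± X`. -/
theorem eq_vieta_of_fewOddRoots {B : ℂ[X]} (hB : 2 ≤ B.natDegree)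
    (h : ∀ l, 1 ≤ l → FewOddRoots ((polyIter B l) ^ 2 - 4)) :
    ∃ ε : ℂ, ε ^ 2 = 1 ∧ B = C ε * vieta B.natDegree := by
  have h1 : FewOddRoots (B ^ 2 - 4) := by simpa only [polyIter_one] using h 1 le_rfl
  have h2 : FewOddRoots ((B.comp B) ^ 2 - 4) := by
    simpa only [polyIter, comp_X] using h 2 (by norm_num)
  have h3 : FewOddRoots ((B.comp (B.comp B)) ^ 2 - 4) := by
    simpa only [polyIter, comp_X] using h 3 (by norm_num)
  have hN : ∀ {γ α : ℂ}, γ ≠ 0 → (C γ⁻¹ * (X - C α)).natDegree = 1 := fun hγ => by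
    rw [natDegree_C_mul (inv_ne_zero hγ), natDegree_X_sub_C]
  obtain ⟨n, hn⟩ : ∃ n, B.natDegree = n + 2 := ⟨B.natDegree - 2, by omega⟩
  obtain ⟨α₁, γ₁, ε₁, e₁, H₁, hγ₁, -, hε₁, hB₁, hs₁⟩ := affine_chebyshev (by omega) h1
  have h2' := FewOddRoots.transfer hs₁ (by omega) (by omega : 1 ≤ B.natDegree) h2
  have h3' := FewOddRoots.transfer hs₁ (by omega)
    (by rw [natDegree_comp]; nlinarith : 1 ≤ (B.comp B).natDegree) h3
  set N₁ : ℂ[X] := C γ₁⁻¹ * (X - C α₁) with hN₁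
  have hd2 : (N₁.comp B).natDegree = B.natDegree := by
    rw [natDegree_comp, hN hγ₁, one_mul]
  obtain ⟨α₂, γ₂, ε₂, e₂, H₂, hγ₂, -, hε₂, hB₂, hs₂⟩ :=
    affine_chebyshev (by omega : 1 ≤ (N₁.comp B).natDegree) h2'
  rw [← comp_assoc] at h3'
  have h3'' := FewOddRoots.transfer hs₂ (by omega) (by omega : 1 ≤ B.natDegree) h3'
  set N₂ : ℂ[X] := C γ₂⁻¹ * (X - C α₂) with hN₂
  have hd3 : (N₂.comp B).natDegree = B.natDegree := by
    rw [natDegree_comp, hN hγ₂, one_mul]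
  obtain ⟨α₃, γ₃, ε₃, e₃, H₃, hγ₃, -, hε₃, hB₃, -⟩ :=
    affine_chebyshev (by omega : 1 ≤ (N₂.comp B).natDegree) h3''
  rw [hn] at hB₁
  rw [hd2, hn] at hB₂
  rw [hd3, hn] at hB₃
  -- The first relation expresses `B` through `D_m`; it is substituted into the other two.
  have hM : ∀ α γ : ℂ, (C α₁ + C γ₁ * X).comp (C ((α - α₁) / γ₁) + C (γ / γ₁) * X) =
      C α + C γ * X := by
    intro α γ
    simp only [add_comp, mul_comp, C_comp, X_comp, mul_add, ← mul_assoc, ← C_mul]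
    rw [← add_assoc, ← C_add, mul_div_cancel₀ _ hγ₁, mul_div_cancel₀ _ hγ₁]
    congr 2
    ring
  have hBD : ∀ α γ : ℂ, B.comp (C α + C γ * X) =
      C ε₁ * (vieta (n + 2)).comp (C ((α - α₁) / γ₁) + C (γ / γ₁) * X) := by
    intro α γ
    rw [← hM α γ, ← comp_assoc, hB₁, mul_comp, C_comp]
  have hrel : ∀ {α γ α' γ' ε' : ℂ}, γ ≠ 0 →
      ((C γ⁻¹ * (X - C α)).comp B).comp (C α' + C γ' * X) = C ε' * vieta (n + 2) →
      C ε₁ * (vieta (n + 2)).comp (C ((α' - α₁) / γ₁) + C (γ' / γ₁) * X) =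
        C α + C (γ * ε') * vieta (n + 2) := by
    intro α γ α' γ' ε' hγ hc
    rw [comp_assoc, hBD] at hc
    simp only [mul_comp, sub_comp, C_comp, X_comp] at hc
    have hu : (C γ * C γ⁻¹ : ℂ[X]) = 1 := by rw [← C_mul, mul_inv_cancel₀ hγ, C_1]
    rw [C_mul]
    linear_combination C γ * hc - (C ε₁ * (vieta (n + 2)).comp
      (C ((α' - α₁) / γ₁) + C (γ' / γ₁) * X) - C α) * hu
  have r₂ := hrel hγ₁ hB₂
  have r₃ := hrel hγ₂ hB₃
  obtain ⟨k₂, l₂, p₂, q₂⟩ := affine_relation hε₁ (div_ne_zero hγ₂ hγ₁) r₂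
  obtain ⟨k₃, l₃, p₃, q₃⟩ := affine_relation hε₁ (div_ne_zero hγ₃ hγ₁) r₃
  have hα : α₂ = α₁ := sub_eq_zero.1 ((div_eq_zero_iff.1 k₂).resolve_right hγ₁)
  have hδ : (γ₂ / γ₁) ^ 2 = 1 := by
    rcases Nat.eq_zero_or_pos n with hn0 | hn0
    · have e1 := q₂ hn0
      have e2 := q₃ hn0
      have e3 : γ₂ * ε₃ = γ₁ * ε₂ := by linear_combination (e2 - e1 + hα) / 2
      rw [div_pow, div_eq_one_iff_eq (pow_ne_zero _ hγ₁)]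
      linear_combination (γ₂ * ε₃ + γ₁ * ε₂) * e3 - γ₂ ^ 2 * hε₃ + γ₁ ^ 2 * hε₂
    · exact p₂ hn0.ne'
  have hα0 : α₁ = 0 := by
    rw [k₂, C_0, zero_add, vieta_comp_sign _ hδ, ← mul_assoc, ← C_mul, l₂] at r₂
    exact C_eq_zero.1 (by linear_combination -r₂)
  have hγsq : γ₁ ^ 2 = 1 := by
    have e1 : (ε₁ * (γ₂ / γ₁) ^ (n + 2)) ^ 2 = (γ₁ * ε₂) ^ 2 := by rw [l₂]
    rw [mul_pow, mul_pow, hε₁, hε₂, ← pow_mul, mul_comm (n + 2) 2, pow_mul, hδ, one_pow] at e1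
    linear_combination -e1
  refine ⟨ε₁ * γ₁ ^ (n + 2), ?_, ?_⟩
  · rw [mul_pow, hε₁, ← pow_mul, mul_comm (n + 2) 2, pow_mul, hγsq, one_pow, one_mul]
  · rw [hn, C_mul, mul_assoc, ← vieta_comp_sign _ hγsq]
    rw [hα0, C_0, zero_add] at hB₁
    have := congrArg (fun p => p.comp (C γ₁ * X)) hB₁
    simp only [comp_assoc, mul_comp, C_comp, X_comp] at this
    rw [← this, ← mul_assoc, ← C_mul, ← sq, hγsq, C_1, one_mul, comp_X]

end rigidity

/-! ### Chebyshev maps -/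

section chebyshev_maps

/-- The iterates of `± D_n` are `± D_{n ^ k}`. -/
lemma iterate_sign_vieta {ε : ℂ} (hε : ε ^ 2 = 1) (n k : ℕ) :
    ∃ η : ℂ, η ^ 2 = 1 ∧ polyIter (C ε * vieta n) k = C η * vieta (n ^ k) := by
  induction k with
  | zero => exact ⟨1, one_pow 2, by simp [polyIter, vieta_one]⟩
  | succ k ih =>
    obtain ⟨η, hη, hk⟩ := ih
    refine ⟨ε * η ^ n, by rw [mul_pow, hε, ← pow_mul, mul_comm n 2, pow_mul, hη, one_pow, mul_one],
      ?_⟩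
    have : C η * vieta (n ^ k) = (C η * X).comp (vieta (n ^ k)) := by simp
    rw [polyIter, hk, this, mul_comp, C_comp, ← comp_assoc, vieta_comp_sign n hη, mul_comp, C_comp,
      vieta_comp, ← mul_assoc, ← C_mul, pow_succ']

lemma eq_sign_of_add_inv {η s t : ℂ} (hη : η ^ 2 = 1) (hs : s ≠ 0) (ht : t ≠ 0)
    (h : s + s⁻¹ = η * (t + t⁻¹)) : s = η * t ∨ s = η * t⁻¹ := by
  have e1 : s * s⁻¹ = 1 := mul_inv_cancel₀ hs
  have e2 : t * t⁻¹ = 1 := mul_inv_cancel₀ ht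
  have : (s - η * t) * (s - η * t⁻¹) = 0 := by
    linear_combination s * h - e1 + η ^ 2 * e2 + hη
  rcases mul_eq_zero.1 this with h | h
  · exact Or.inl (sub_eq_zero.1 h)
  · exact Or.inr (sub_eq_zero.1 h)

/-- The theorem for the maps `± D_n`. -/
theorem common_iterate_vieta {B : ℂ[X]} (hB : 2 ≤ B.natDegree) {n : ℕ} (hn : 2 ≤ n) {ε : ℂ}
    (hε : ε ^ 2 = 1) {z b : ℂ}
    (h : {x | (∃ i, (polyIter (C ε * vieta n) i).eval z = x) ∧
      ∃ j, (polyIter B j).eval b = x}.Infinite) :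
    ∃ k l, 1 ≤ k ∧ 1 ≤ l ∧ polyIter (C ε * vieta n) k = polyIter B l := by
  classical
  set A := C ε * vieta n with hA
  obtain ⟨a, ha0, rfl⟩ := exists_add_inv z
  have hval : ∀ i, ∃ η : ℂ, η ^ 2 = 1 ∧
      (polyIter A i).eval (a + a⁻¹) = η * (a ^ n ^ i + a⁻¹ ^ n ^ i) := by
    intro i
    obtain ⟨η, hη, hi⟩ := iterate_sign_vieta hε n i
    exact ⟨η, hη, by rw [hi, eval_mul, eval_C, vieta_eval _ ha0]⟩
  have hsign : ∀ {η : ℂ}, η ^ 2 = 1 → η = 1 ∨ η = -1 := fun hη => by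
    rw [sq] at hη; exact mul_self_eq_one_iff.1 hη
  have ha : ∀ k : ℕ, 0 < k → a ^ k ≠ 1 := by
    intro k hk h1
    have hfin : ((fun t => a ^ t + a⁻¹ ^ t) '' {t | t < k} ∪
      (fun t => -1 * (a ^ t + a⁻¹ ^ t)) '' {t | t < k}).Finite :=
      ((Set.finite_lt_nat k).image _).union ((Set.finite_lt_nat k).image _)
    refine h (hfin.subset ?_)
    rintro x ⟨⟨i, rfl⟩, -⟩
    obtain ⟨η, hη, hi⟩ := hval i
    have h1' : a⁻¹ ^ k = 1 := by rw [inv_pow, h1, inv_one]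
    rw [hi, pow_eq_pow_mod _ h1, pow_eq_pow_mod (n ^ i) h1']
    rcases hsign hη with rfl | rfl
    · exact Or.inl ⟨n ^ i % k, Nat.mod_lt _ hk, by simp⟩
    · exact Or.inr ⟨n ^ i % k, Nat.mod_lt _ hk, rfl⟩
  have hidx : ∀ N, {i : ℕ | ∃ j, N < j ∧
      (polyIter A i).eval (a + a⁻¹) = (polyIter B j).eval b}.Infinite := by
    intro N hfin
    refine infinite_large_indices h (fun x hx => hx) N
      ((hfin.image fun i => (polyIter A i).eval (a + a⁻¹)).subset ?_)
    rintro x ⟨-, i, j, -, hj, hi, hjx⟩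
    exact ⟨i, ⟨j, hj, hi.trans hjx.symm⟩, hi⟩
  have hne : ∀ i, (polyIter A i).eval (a + a⁻¹) ≠ 0 := by
    intro i h0
    obtain ⟨η, hη, hi⟩ := hval i
    rw [hi] at h0
    have hη0 : η ≠ 0 := by rintro rfl; norm_num at hη
    have h1 := (mul_eq_zero.1 h0).resolve_left hη0
    have h2 : a ^ n ^ i * a⁻¹ ^ n ^ i = 1 := by rw [← mul_pow, mul_inv_cancel₀ ha0, one_pow]
    refine ha (4 * n ^ i) (by positivity) ?_
    rw [mul_comm 4, pow_mul]
    linear_combination (a ^ n ^ i * ((a ^ n ^ i) ^ 2 - 1)) * h1 - ((a ^ n ^ i) ^ 2 - 1) * h2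
  have hodd : ∀ l, 1 ≤ l → FewOddRoots ((polyIter B l) ^ 2 - 4) := by
    intro l hl r₁ r₂ r₃ m₁ m₂ m₃
    by_contra! hcon
    obtain ⟨n12, n13, n23⟩ := hcon
    have hG0 : (polyIter B l) ^ 2 - 4 ≠ 0 := by
      intro h0
      have h1 : ((polyIter B l) ^ 2 - 4 : ℂ[X]).natDegree = 2 * B.natDegree ^ l := by
        rw [show (4 : ℂ[X]) = C 4 from (C_ofNat 4).symm, natDegree_sub_C, natDegree_pow,
          natDegree_polyIter]
      rw [h0, natDegree_zero] at h1
      have : 0 < B.natDegree ^ l := by positivity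
      omega
    have hq : ∀ r, ∃ q : ℂ[X], (polyIter B l) ^ 2 - 4 =
        (X - C r) ^ ((polyIter B l) ^ 2 - 4).rootMultiplicity r * q ∧ q.eval r ≠ 0 := by
      intro r
      obtain ⟨q, h1, h2⟩ := exists_eq_pow_rootMultiplicity_mul_and_not_dvd _ hG0 r
      exact ⟨q, h1, fun h0 => h2 (dvd_iff_isRoot.2 h0)⟩
    obtain ⟨q₁, f₁, g₁⟩ := hq r₁
    obtain ⟨q₂, f₂, g₂⟩ := hq r₂
    obtain ⟨q₃, f₃, g₃⟩ := hq r₃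
    have hfin := finite_chebyshev_values ha0 ha n12 n13 n23 m₁ m₂ m₃ f₁ f₂ f₃ g₁ g₂ g₃
      (B.coeffs ∪ {b})
    refine hidx l ((hfin.preimage (f := fun i : ℕ => n ^ i)
      (Nat.pow_right_injective hn).injOn).subset ?_)
    rintro i ⟨j, hj, hij⟩
    refine ⟨(polyIter B (j - l)).eval b,
      iterate_mem_adjoin Finset.subset_union_left (by simp) _, ?_⟩
    obtain ⟨η, hη, hi⟩ := hval i
    rw [← eval_comp, ← polyIter_add, Nat.add_sub_cancel' hj.le, ← hij, hi]
    have h2 : a ^ n ^ i * a⁻¹ ^ n ^ i = 1 := by rw [← mul_pow, mul_inv_cancel₀ ha0, one_pow]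
    linear_combination (a ^ n ^ i + a⁻¹ ^ n ^ i) ^ 2 * hη + 4 * h2
  obtain ⟨ε', hε', hBv⟩ := eq_vieta_of_fewOddRoots hB hodd
  set m := B.natDegree with hm
  obtain ⟨w, hw0, hbw⟩ := exists_add_inv b
  obtain ⟨f, hf⟩ := exists_hom_rat (a := Units.mk0 a ha0) fun k hk h1 =>
    ha k hk (by simpa using congrArg Units.val h1)
  set p := f (Additive.ofMul (Units.mk0 w hw0))
  have hf1 : ∀ u : ℂˣ, u ^ 2 = 1 → f (Additive.ofMul u) = 0 := by
    intro u hu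
    have h3 := congrArg (fun u => f (Additive.ofMul u)) hu
    simp only [ofMul_pow, map_nsmul, ofMul_one, map_zero] at h3
    simpa using h3
  have hlin : ∀ i j, (polyIter A i).eval (a + a⁻¹) = (polyIter B j).eval b →
      (m : ℚ) ^ j * |p| = n ^ i := by
    intro i j hij
    obtain ⟨η, hη, hi⟩ := hval i
    obtain ⟨η', hη', hj⟩ := iterate_sign_vieta hε' m j
    rw [hi, hBv, hj, hbw, eval_mul, eval_C, vieta_eval _ hw0, inv_pow, inv_pow] at hij
    have hη0 : η * η' ≠ 0 := by
      rintro h0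
      have : (η * η') ^ 2 = 1 := by rw [mul_pow, hη, hη', one_mul]
      rw [h0] at this
      norm_num at this
    have hs2 : (η * η') ^ 2 = 1 := by rw [mul_pow, hη, hη', one_mul]
    have hij' : a ^ n ^ i + (a ^ n ^ i)⁻¹ = η * η' * (w ^ m ^ j + (w ^ m ^ j)⁻¹) := by
      linear_combination η * hij - (a ^ n ^ i + (a ^ n ^ i)⁻¹) * hη
    have hu2 : Units.mk0 (η * η') hη0 ^ 2 = 1 := Units.ext (by simpa using hs2)
    have habs : |(m : ℚ) ^ j * p| = (m : ℚ) ^ j * |p| := by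
      rw [abs_mul, abs_of_nonneg (by positivity : (0 : ℚ) ≤ (m : ℚ) ^ j)]
    have hnpos : (0 : ℚ) ≤ (n : ℚ) ^ i := by positivity
    rw [← habs]
    rcases eq_sign_of_add_inv hs2 (pow_ne_zero _ ha0) (pow_ne_zero _ hw0) hij' with h1 | h1
    · have h2 : Units.mk0 a ha0 ^ n ^ i =
          Units.mk0 (η * η') hη0 * Units.mk0 w hw0 ^ m ^ j := Units.ext (by simpa using h1)
      have h3 := congrArg (fun u => f (Additive.ofMul u)) h2
      simp only [ofMul_mul, ofMul_pow, map_add, map_nsmul, hf, hf1 _ hu2] at h3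
      simp only [nsmul_eq_mul, Nat.cast_pow, mul_one, zero_add] at h3
      rw [← h3, abs_of_nonneg hnpos]
    · have h2 : Units.mk0 a ha0 ^ n ^ i =
          Units.mk0 (η * η') hη0 * (Units.mk0 w hw0 ^ m ^ j)⁻¹ := Units.ext (by simpa using h1)
      have h3 := congrArg (fun u => f (Additive.ofMul u)) h2
      simp only [ofMul_mul, ofMul_pow, ofMul_inv, map_add, map_neg, map_nsmul, hf,
        hf1 _ hu2] at h3
      simp only [nsmul_eq_mul, Nat.cast_pow, mul_one, zero_add] at h3
      rw [← abs_neg, ← h3, abs_of_nonneg hnpos]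
  obtain ⟨i₀, j₀, -, h₀⟩ := (hidx 0).nonempty
  obtain ⟨i₁, ⟨j₁, -, h₁⟩, hi⟩ := (hidx 0).exists_gt i₀
  obtain ⟨hj, hpow⟩ := pow_eq_pow_of_two_solutions (by omega) hn (hlin i₀ j₀ h₀) (hlin i₁ j₁ h₁) hi
  refine ⟨i₁ - i₀, j₁ - j₀, by omega, by omega, ?_⟩
  -- Both iterates are `± D_N` with the same `N`, and they agree at a point where they do not
  -- vanish.
  set x := (polyIter A i₀).eval (a + a⁻¹) with hx
  have ex : (polyIter A (i₁ - i₀)).eval x = (polyIter B (j₁ - j₀)).eval x := by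
    nth_rw 2 [h₀]
    rw [hx, ← eval_comp, ← eval_comp, ← polyIter_add, ← polyIter_add, Nat.sub_add_cancel hj.le,
      Nat.sub_add_cancel hi.le, h₁]
  have ex0 : (polyIter A (i₁ - i₀)).eval x ≠ 0 := by
    rw [hx, ← eval_comp, ← polyIter_add, Nat.sub_add_cancel hi.le]
    exact hne i₁
  obtain ⟨η, hη, hAη⟩ := iterate_sign_vieta hε n (i₁ - i₀)
  obtain ⟨η', hη', hBη⟩ := iterate_sign_vieta hε' m (j₁ - j₀)
  rw [← hA] at hAη
  rw [← hBv, hpow] at hBη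
  rw [hAη, hBη, eval_mul, eval_mul, eval_C, eval_C] at ex
  rw [hAη, eval_mul] at ex0
  rw [hAη, hBη, mul_right_cancel₀ (right_ne_zero_of_mul ex0) ex]

end chebyshev_maps

/-! ### Conjugation to normal forms -/

section conjugation

lemma iterate_semiconj {A P μ : ℂ[X]} (h : A.comp μ = μ.comp P) (k : ℕ) :
    (polyIter A k).comp μ = μ.comp (polyIter P k) := by
  induction k with
  | zero => simp [polyIter]
  | succ k ih => rw [polyIter, comp_assoc, ih, ← comp_assoc, h, comp_assoc, polyIter]

/-- The conclusion is invariant under simultaneous affine conjugation of both polynomials. -/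
lemma common_iterate_of_linConj {A B P : ℂ[X]} (hAP : LinConj A P) (hB : 2 ≤ B.natDegree)
    {z₁ z₂ : ℂ} (h : (polyOrbit A z₁ ∩ polyOrbit B z₂).Infinite)
    (hP : ∀ B' : ℂ[X], 2 ≤ B'.natDegree → ∀ a b : ℂ,
      {x | (∃ i, (polyIter P i).eval a = x) ∧ ∃ j, (polyIter B' j).eval b = x}.Infinite →
      ∃ k l, 1 ≤ k ∧ 1 ≤ l ∧ polyIter P k = polyIter B' l) :
    ∃ k l, 1 ≤ k ∧ 1 ≤ l ∧ polyIter A k = polyIter B l := by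
  obtain ⟨μ, hμ, hconj⟩ := hAP
  have hμ1 : μ.natDegree = 1 := natDegree_eq_of_degree_eq_some hμ
  obtain ⟨c, hc, d, rfl⟩ := natDegree_eq_one.1 hμ1
  set μ : ℂ[X] := C c * X + C d with hμdef
  set ν : ℂ[X] := C c⁻¹ * (X - C d) with hν
  have hc1 : (C c * C c⁻¹ : ℂ[X]) = 1 := by rw [← C_mul, mul_inv_cancel₀ hc, C_1]
  have hμν : μ.comp ν = X := by
    simp only [hμdef, hν, add_comp, mul_comp, C_comp, X_comp]
    linear_combination (X - C d) * hc1
  have hνμ : ν.comp μ = X := by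
    simp only [hμdef, hν, mul_comp, sub_comp, C_comp, X_comp]
    linear_combination X * hc1
  have hν1 : ν.natDegree = 1 := by
    rw [hν, natDegree_C_mul (inv_ne_zero hc), natDegree_X_sub_C]
  have hconjB : B.comp μ = μ.comp (ν.comp (B.comp μ)) := by
    rw [← comp_assoc μ, hμν, X_comp]
  have hval : ∀ {A P : ℂ[X]}, A.comp μ = μ.comp P → ∀ k z,
      (polyIter P k).eval (ν.eval z) = ν.eval ((polyIter A k).eval z) := by
    intro A P hAP k z
    have h1 : ν.comp (polyIter A k) = (polyIter P k).comp ν := by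
      calc ν.comp (polyIter A k) = ν.comp (((polyIter A k).comp μ).comp ν) := by
            rw [comp_assoc, hμν, comp_X]
        _ = (ν.comp μ).comp ((polyIter P k).comp ν) := by
            rw [iterate_semiconj hAP, comp_assoc, comp_assoc]
        _ = (polyIter P k).comp ν := by rw [hνμ, X_comp]
    rw [← eval_comp, ← eval_comp, h1]
  have hinj : Function.Injective fun z => ν.eval z := by
    intro x y hxy
    have h1 := congrArg (fun z => μ.eval z) hxy
    simpa only [← eval_comp, hμν, eval_X] using h1
  obtain ⟨k, l, hk, hl, hkl⟩ := hP (ν.comp (B.comp μ))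
    (by rw [natDegree_comp, natDegree_comp, hν1, hμ1, one_mul, mul_one]; exact hB)
    (ν.eval z₁) (ν.eval z₂) ((h.image hinj.injOn).mono (by
      rintro _ ⟨x, ⟨⟨i, hi⟩, ⟨j, hj⟩⟩, rfl⟩
      refine ⟨⟨i, ?_⟩, j, ?_⟩
      · rw [hval hconj, eval_polyIter]
        exact congrArg (fun z => ν.eval z) hi
      · rw [hval hconjB, eval_polyIter]
        exact congrArg (fun z => ν.eval z) hj))
  refine ⟨k, l, hk, hl, ?_⟩
  calc polyIter A k = ((polyIter A k).comp μ).comp ν := by rw [comp_assoc, hμν, comp_X]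
    _ = ((polyIter B l).comp μ).comp ν := by
      rw [iterate_semiconj hconj, iterate_semiconj hconjB, hkl]
    _ = polyIter B l := by rw [comp_assoc, hμν, comp_X]

/-- The maps `± T_n` and `± D_n` are linearly conjugate through `x ↦ 2 x`. -/
lemma LinConj.vieta_of_chebyshev {A : ℂ[X]} {n : ℕ} {ε : ℂ}
    (h : LinConj A (C ε * Chebyshev.T ℂ (n : ℤ))) : LinConj A (C ε * vieta n) := by
  obtain ⟨μ, hμ, hA⟩ := h
  have hhalf : (C 2 * X : ℂ[X]).comp (C 2⁻¹ * X) = X := by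
    rw [mul_comp, C_comp, X_comp, ← mul_assoc, ← C_mul, mul_inv_cancel₀ two_ne_zero, C_1, one_mul]
  have hT : (Chebyshev.T ℂ (n : ℤ)).comp (C 2⁻¹ * X) = C 2⁻¹ * vieta n := by
    have h1 := congrArg (fun p => p.comp (C 2⁻¹ * X)) (Chebyshev.C_comp_two_mul_X ℂ (n : ℤ))
    have h2 : (2 : ℂ[X]) = C 2 := (C_ofNat 2).symm
    simp only [h2] at h1
    rw [comp_assoc, hhalf, comp_X, mul_comp, C_comp] at h1
    rw [vieta, h1, ← mul_assoc, ← C_mul, inv_mul_cancel₀ two_ne_zero, C_1, one_mul]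
  refine ⟨μ.comp (C 2⁻¹ * X), ?_, ?_⟩
  · have h1 : (μ.comp (C 2⁻¹ * X)).natDegree = 1 := by
      rw [natDegree_comp, natDegree_C_mul_X _ (by norm_num),
        natDegree_eq_of_degree_eq_some (n := 1) hμ]
    exact (degree_eq_iff_natDegree_eq_of_pos one_pos).2 h1
  · rw [← comp_assoc, hA, comp_assoc, comp_assoc, mul_comp, C_comp, hT, mul_comp, C_comp, X_comp]
    congr 1
    ring

end conjugation

theorem orbits_infinite_intersection_special_common_iterate
    (A B : Polynomial ℂ) (hA : 2 ≤ A.natDegree) (hB : 2 ≤ B.natDegree)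
    (z₁ z₂ : ℂ) (h : (polyOrbit A z₁ ∩ polyOrbit B z₂).Infinite)
    (hAsp : SpecialPoly A) :
    ∃ k l : ℕ, 1 ≤ k ∧ 1 ≤ l ∧ polyIter A k = polyIter B l := by
  have hcheb : ∀ ε : ℂ, ε ^ 2 = 1 → LinConj A (C ε * Chebyshev.T ℂ (A.natDegree : ℤ)) →
      ∃ k l : ℕ, 1 ≤ k ∧ 1 ≤ l ∧ polyIter A k = polyIter B l := fun ε hε hT =>
    common_iterate_of_linConj hT.vieta_of_chebyshev hB h fun B' hB' a b hinf =>
      common_iterate_vieta hB' hA hε hinf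
  rcases hAsp with hpow | hT | hT
  · refine common_iterate_of_linConj hpow hB h fun B' hB' a b hinf =>
      common_iterate_pow hB' hA (a := a) (b := b) ?_
    simpa only [iterate_pow, eval_pow, eval_X] using hinf
  · exact hcheb 1 (one_pow 2) (by rwa [C_1, one_mul])
  · exact hcheb (-1) (by norm_num) (by rwa [C_neg, C_1, neg_one_mul])
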